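/- arXiv:0911.5086 — 3 statements merged into one kernel-verified Lean document; each statement's English description precedes it below -/
import Mathlib

section
/- Fix d ≥ 2 and m ≥ 2. There exists a constant c > 0, depending only on d and m, such that for any m parallel hyperplanes Π_1, …, Π_m in E^{d+1} and finite sets P_i ⊂ Π_i with each 𝒫_i = conv(P_i) a d-dimensional polytope with n_i vertices, the polytope 𝒫 = conv(P_1 ∪ … ∪ P_m) satisfies, for every 0 ≤ k ≤ ⌊d/2⌋: f_k(𝒫) ≤ c · ( Σ_{1 ≤ i ≠ j ≤ m} n_i · n_j^k + Σ_{i=1}^m n_i^{min(k+1, ⌊d/2⌋)} ). (Lemma 2.4.) -/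
/-!
A `k`-face `F` of `𝒫 = conv (P₁ ∪ … ∪ Pₘ)` is the convex hull of its vertices, and is determined by
any `k + 1` of them that affinely span it. Each such vertex lying on `Πᵢ` is a vertex of `conv Pᵢ`, so
`F` has a colour pattern `c : Fin (k + 1) → Fin m`, and there are at most `∏ n_{c j}` faces with
pattern `c`. If `c` is not constant, this product is at most `nᵢ nⱼᵏ`, where `n_j` is the largest
factor and `i ≠ j` is another colour (`prod_le_of_nonconstant`). If `c` is constantly `i`, the product
is `nᵢ^(k+1)`, which suffices for `k + 1 ≤ ⌊d/2⌋`. There remain the faces with `k = ⌊d/2⌋` contained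
in one `Πᵢ`. These are proper faces of `conv Pᵢ`, and an asymptotic upper bound theorem is needed: a
`d`-polytope with `n` vertices has `O(n^⌊d/2⌋)` proper faces (`ncard_faces_le`).

The proof of the latter is a linear algebra version of Seidel's argument. With the origin at the
centroid, let `pᵢ` be the vertices; a proper face is the set where some functional `a` with
`a pᵢ ≤ 1` for all `i` attains `1`. Replace the right-hand sides `1` by `bᵢ = 1 + t eᵢ` with `e`
generic and `t > 0` small. The polyhedron `{a | a pᵢ ≤ bᵢ}` is then simple: the set `T` of constraints
tight at a vertex is a basis. Every face `F` gives a vertex whose tight set `T` has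
`p (T ∩ F)` spanning `p F` (`eventually_exists_vertex`), so there are at most `2 ^ d` faces per vertex.
To count vertices, take a generic vector `u` and write `u = ∑ cᵢ pᵢ` over the basis `T`. The vertex
maximises evaluation at `u` on the face where the constraints with `cᵢ < 0` are tight, hence `T` is
determined by `{i | cᵢ < 0}`, and likewise by `{i | cᵢ > 0}`. One of these two sets has at most `d / 2`
elements, which leaves at most `2 (n + 1) ^ (d / 2)` vertices (`card_vertexSets_le`).
-/

open Set Pointwise RealInnerProductSpace

/-- The dimension of the affine hull of a set. -/
noncomputable def adim {N : ℕ} (F : Set (EuclideanSpace ℝ (Fin N))) : ℕ :=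
  Module.finrank ℝ (vectorSpan ℝ F)

/-- The number of `k`-dimensional nonempty exposed faces of `C`. -/
noncomputable def fCount {N : ℕ} (C : Set (EuclideanSpace ℝ (Fin N))) (k : ℕ) : ℕ :=
  {F : Set (EuclideanSpace ℝ (Fin N)) |
    IsExposed ℝ C F ∧ F.Nonempty ∧ adim F = k}.ncard

/-! ### Polyhedra in the dual space and generic perturbations -/

/-- From a feasible functional one reaches, without losing tight constraints, a feasible one whose
tight constraints span all constraints in `s`: as long as some `p i₀` lies outside the span of the
tight ones, move along a functional vanishing on that span until a new constraint becomes tight. -/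
lemma exists_tight_spanning {ι W : Type*} [Finite ι] [AddCommGroup W] [Module ℝ W]
    (p : ι → W) (b : ι → ℝ) (s : Set ι) (a : Module.Dual ℝ W) (ha : ∀ i ∈ s, a (p i) ≤ b i) :
    ∃ a' : Module.Dual ℝ W, (∀ i ∈ s, a' (p i) ≤ b i) ∧
      (∀ i ∈ s, a (p i) = b i → a' (p i) = b i) ∧
      ∀ i ∈ s, p i ∈ Submodule.span ℝ (p '' {j ∈ s | a' (p j) = b j}) := by
  induction hN : {j ∈ s | a (p j) ≠ b j}.ncard using Nat.strong_induction_on generalizing a with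
  | _ N ih =>
  by_cases hall : ∀ i ∈ s, p i ∈ Submodule.span ℝ (p '' {j ∈ s | a (p j) = b j})
  · exact ⟨a, ha, fun _ _ h => h, hall⟩
  push Not at hall
  obtain ⟨i₀, hi₀s, hi₀⟩ := hall
  obtain ⟨v, hv₀, hvK⟩ := Submodule.exists_dual_map_eq_bot_of_notMem hi₀ inferInstance
  have hvK' : ∀ j ∈ s, a (p j) = b j → v (p j) = 0 := by
    intro j hj hjt
    have : v (p j) ∈ (Submodule.span ℝ (p '' {j ∈ s | a (p j) = b j})).map v :=
      Submodule.mem_map_of_mem (Submodule.subset_span ⟨j, ⟨hj, hjt⟩, rfl⟩)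
    rw [hvK] at this
    simpa using this
  obtain ⟨w, hw₀, hwK⟩ : ∃ w : Module.Dual ℝ W, 0 < w (p i₀) ∧
      ∀ j ∈ s, a (p j) = b j → w (p j) = 0 := by
    rcases lt_or_gt_of_ne hv₀ with h | h
    · exact ⟨-v, by simpa using h, fun j hj hjt => by simp [hvK' j hj hjt]⟩
    · exact ⟨v, h, hvK'⟩
  obtain ⟨i₁, ⟨hi₁s, hi₁w⟩, hmin⟩ := Set.exists_min_image {i ∈ s | 0 < w (p i)}
    (fun i => (b i - a (p i)) / w (p i)) (Set.toFinite _) ⟨i₀, hi₀s, hw₀⟩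
  set r := (b i₁ - a (p i₁)) / w (p i₁) with hr
  have hr0 : 0 ≤ r := div_nonneg (sub_nonneg.2 (ha _ hi₁s)) hi₁w.le
  have hfeas : ∀ i ∈ s, (a + r • w) (p i) ≤ b i := by
    intro i hi
    simp only [LinearMap.add_apply, LinearMap.smul_apply, smul_eq_mul]
    by_cases hwi : 0 < w (p i)
    · have := hmin i ⟨hi, hwi⟩
      rw [le_div_iff₀ hwi] at this
      linarith
    · have := mul_nonneg hr0 (neg_nonneg.2 (not_lt.1 hwi))
      have := ha i hi
      linarith
  have hkeep : ∀ i ∈ s, a (p i) = b i → (a + r • w) (p i) = b i := by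
    intro i hi h
    simp [hwK i hi h, h]
  have hnew : (a + r • w) (p i₁) = b i₁ := by
    simp only [LinearMap.add_apply, LinearMap.smul_apply, smul_eq_mul, hr]
    field_simp
    ring
  have hlt : {j ∈ s | (a + r • w) (p j) ≠ b j}.ncard < N := by
    rw [← hN]
    refine Set.ncard_lt_ncard ⟨fun j hj => ⟨hj.1, fun h => hj.2 (hkeep j hj.1 h)⟩, fun hsub => ?_⟩
      (Set.toFinite _)
    exact (hsub ⟨hi₁s, fun h => hi₁w.ne' (hwK i₁ hi₁s h)⟩).2 hnew
  obtain ⟨a', h1, h2, h3⟩ := ih _ hlt _ hfeas rfl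
  exact ⟨a', h1, fun i hi h => h2 i hi (hkeep i hi h), h3⟩

/-- A vector lying in no proper subspace spanned by some of the `p i`. -/
lemma generic_direction {ι W : Type*} [Finite ι] [AddCommGroup W] [Module ℝ W] (p : ι → W) :
    ∃ u : W, ∀ C : Set ι, u ∈ Submodule.span ℝ (p '' C) → Submodule.span ℝ (p '' C) = ⊤ := by
  classical
  have hfin : {K : Submodule ℝ W | K ≠ ⊤ ∧ ∃ C : Set ι, K = Submodule.span ℝ (p '' C)}.Finite :=
    (Set.finite_range fun C : Set ι => Submodule.span ℝ (p '' C)).subset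
      (by rintro K ⟨-, C, rfl⟩; exact ⟨C, rfl⟩)
  have h := Subspace.biUnion_ne_univ_of_top_notMem (s := hfin.toFinset) (by simp)
  obtain ⟨u, hu⟩ := (Set.ne_univ_iff_exists_notMem _).1 h
  refine ⟨u, fun C hC => by_contra fun hne => hu ?_⟩
  simp only [Set.mem_iUnion]
  exact ⟨_, by simpa using ⟨hne, C, rfl⟩, hC⟩

/-- For generic `e` and small `t > 0`, constraints `a (p i) = 1 + t * e i` that hold simultaneously
have linearly independent left-hand sides: a linear relation `l` between the `p i` would force
`∑ l i + t * ∑ e i * l i = 0`, which for `∑ e i * l i ≠ 0` excludes a single value of `t`. -/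
lemma generic_perturbation {ι W : Type*} [Fintype ι] [AddCommGroup W] [Module ℝ W] (p : ι → W) :
    ∃ e : ι → ℝ, ∀ᶠ t in nhdsWithin (0 : ℝ) (Set.Ioi 0), ∀ C : Set ι,
      (∃ a : Module.Dual ℝ W, ∀ i ∈ C, a (p i) = 1 + t * e i) → LinearIndepOn ℝ p C := by
  classical
  have key : ∀ C : Set ι, ∃ l : ι → ℝ, ¬ LinearIndepOn ℝ p C →
      l ≠ 0 ∧ (∀ i ∉ C, l i = 0) ∧ ∑ i, l i • p i = 0 := by
    intro C
    by_cases hC : LinearIndepOn ℝ p C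
    · exact ⟨0, fun h => (h hC).elim⟩
    have h1 : C = ((C.toFinset : Finset ι) : Set ι) := by simp
    have hC' := hC
    rw [h1, linearIndepOn_finset_iff] at hC'
    push Not at hC'
    obtain ⟨g, hg, i, hi, hgi⟩ := hC'
    refine ⟨fun j => if j ∈ C then g j else 0, fun _ => ⟨fun h => hgi ?_, by simp +contextual, ?_⟩⟩
    · have := congrFun h i
      simpa [Set.mem_toFinset.1 hi] using this
    · rw [← hg]
      simp only [ite_smul, zero_smul]
      rw [← Finset.sum_filter]
      exact Finset.sum_congr (by ext; simp) fun _ _ => rfl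
  choose l hl using key
  let K : Set ι → Submodule ℝ (ι → ℝ) := fun C => LinearMap.ker (Fintype.linearCombination ℝ (l C))
  have hfin : {L : Submodule ℝ (ι → ℝ) | ∃ C : Set ι, ¬ LinearIndepOn ℝ p C ∧ L = K C}.Finite :=
    (Set.finite_range K).subset (by rintro _ ⟨C, -, rfl⟩; exact ⟨C, rfl⟩)
  have h := Subspace.biUnion_ne_univ_of_top_notMem (s := hfin.toFinset) (by
    simp only [Set.Finite.mem_toFinset, Set.mem_ofPred_eq, not_exists, not_and]
    intro C hC htop
    obtain ⟨i, hi⟩ := Function.ne_iff.1 (hl C hC).1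
    have : Pi.single i 1 ∈ K C := htop ▸ Submodule.mem_top
    simp [K, Fintype.linearCombination_apply_single] at this
    exact hi this)
  obtain ⟨e, he⟩ := (Set.ne_univ_iff_exists_notMem _).1 h
  refine ⟨e, ?_⟩
  rw [Filter.eventually_all]
  intro C
  by_cases hC : LinearIndepOn ℝ p C
  · exact Filter.Eventually.of_forall fun _ _ => hC
  have hne : ∑ i, e i * l C i ≠ 0 := fun h0 => he (by
    simp only [Set.mem_iUnion]
    exact ⟨K C, by simpa using ⟨C, hC, rfl⟩, by simpa [K, Fintype.linearCombination_apply] using h0⟩)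
  have hev : ∀ᶠ t in nhdsWithin (0 : ℝ) (Set.Ioi 0), t ≠ -(∑ i, l C i) / ∑ i, e i * l C i := by
    by_cases h0 : -(∑ i, l C i) / ∑ i, e i * l C i = 0
    · rw [h0]
      filter_upwards [self_mem_nhdsWithin] with t ht using ne_of_gt ht
    · exact nhdsWithin_le_nhds (eventually_ne_nhds (Ne.symm h0))
  filter_upwards [hev] with t ht
  rintro ⟨a, ha⟩
  refine (ht ?_).elim
  obtain ⟨-, hsupp, hsum⟩ := hl C hC
  rw [eq_div_iff hne]
  have h1 : ∑ i, l C i * a (p i) = 0 := by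
    have := congrArg a hsum
    simpa using this
  have h2 : ∑ i, l C i * a (p i) = ∑ i, l C i + t * ∑ i, e i * l C i := by
    rw [Finset.mul_sum, ← Finset.sum_add_distrib]
    refine Finset.sum_congr rfl fun i _ => ?_
    by_cases hi : i ∈ C
    · rw [ha i hi]; ring
    · rw [hsupp i hi]; ring
  linarith

/-- Each face `F` survives in the perturbed polyhedron: some vertex `a` of it is tight on a subset
`S` of `F` with `p '' S` spanning `p '' F`. The starting point is `a₀ + t • α`, where `a₀` exposes `F`
and `α ≤ e` holds on `F` with equality on a spanning subset; off `F`, the slack of `a₀` absorbs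
`t • α`. -/
lemma eventually_exists_vertex {ι W : Type*} [Finite ι] [AddCommGroup W] [Module ℝ W]
    (p : ι → W) (hp : Submodule.span ℝ (Set.range p) = ⊤) (e : ι → ℝ) (F : Set ι)
    (a₀ : Module.Dual ℝ W) (ha₀ : ∀ i, a₀ (p i) ≤ 1) (hF : F = {i | a₀ (p i) = 1}) :
    ∀ᶠ t in nhdsWithin (0 : ℝ) (Set.Ioi 0), ∃ a : Module.Dual ℝ W, (∀ i, a (p i) ≤ 1 + t * e i) ∧
      Submodule.span ℝ (p '' {i | a (p i) = 1 + t * e i}) = ⊤ ∧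
      ∃ S ⊆ F, S ⊆ {i | a (p i) = 1 + t * e i} ∧ ∀ i ∈ F, p i ∈ Submodule.span ℝ (p '' S) := by
  obtain ⟨M, hM⟩ : ∃ M : ℝ, ∀ i, M ≤ e i := by
    obtain ⟨M, hM⟩ := (Set.finite_range e).bddBelow
    exact ⟨M, fun i => hM ⟨i, rfl⟩⟩
  obtain ⟨α, h1, -, h3⟩ := exists_tight_spanning p e F (M • a₀) (by
    intro i hi
    rw [hF] at hi
    simp [hi.out, hM])
  have hev : ∀ᶠ t in nhdsWithin (0 : ℝ) (Set.Ioi 0), ∀ i, i ∉ F →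
      a₀ (p i) + t * α (p i) < 1 + t * e i := by
    rw [Filter.eventually_all]
    intro i
    by_cases hi : i ∈ F
    · exact Filter.Eventually.of_forall fun _ h => (h hi).elim
    have hlt : a₀ (p i) < 1 := lt_of_le_of_ne (ha₀ i) (by rw [hF] at hi; exact hi)
    have : ∀ᶠ t in nhds (0 : ℝ), a₀ (p i) + t * α (p i) < 1 + t * e i := by
      apply ContinuousAt.eventually_lt <;> first | fun_prop | simpa using hlt
    filter_upwards [nhdsWithin_le_nhds this] with t ht _ using ht
  filter_upwards [hev, self_mem_nhdsWithin] with t ht htpos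
  have htpos : 0 < t := htpos
  have hone : ∀ i ∈ F, a₀ (p i) = 1 := fun i hi => by rw [hF] at hi; exact hi
  obtain ⟨a, g1, g2, g3⟩ := exists_tight_spanning p (fun i => 1 + t * e i) Set.univ (a₀ + t • α) (by
    intro i _
    by_cases hi : i ∈ F
    · have := mul_le_mul_of_nonneg_left (h1 i hi) htpos.le
      simpa [hone i hi] using this
    · simpa using (ht i hi).le)
  refine ⟨a, fun i => g1 i trivial, ?_, {j ∈ F | α (p j) = e j}, fun i hi => hi.1, ?_, h3⟩
  · rw [eq_top_iff, ← hp, Submodule.span_le]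
    rintro _ ⟨i, rfl⟩
    simpa using g3 i trivial
  · rintro i ⟨hi, hαi⟩
    exact g2 i trivial (by simp [hone i hi, hαi])

/-! ### Counting the vertices of a simple polyhedron -/

/-- `T` is the set of constraints tight at some vertex of the polyhedron `{a | ∀ i, a (p i) ≤ b i}`;
a vertex is a feasible `a` whose tight constraints span the space. -/
def VertexSet {ι W : Type*} [AddCommGroup W] [Module ℝ W] (p : ι → W) (b : ι → ℝ)
    (T : Finset ι) : Prop :=
  ∃ a : Module.Dual ℝ W, (∀ i, a (p i) ≤ b i) ∧ (∀ i, i ∈ T ↔ a (p i) = b i) ∧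
    Submodule.span ℝ (p '' T) = ⊤

/-- For generic `b` and `u`, the tight set of a vertex is a basis, and all coefficients of `u` in it
are nonzero. -/
lemma vertexSet_coeff {ι W : Type*} [Fintype ι] [DecidableEq ι] [AddCommGroup W] [Module ℝ W]
    {p : ι → W} {b : ι → ℝ}
    (hb : ∀ C : Set ι, (∃ a : Module.Dual ℝ W, ∀ i ∈ C, a (p i) = b i) → LinearIndepOn ℝ p C)
    {u : W} (hu : ∀ C : Set ι, u ∈ Submodule.span ℝ (p '' C) → Submodule.span ℝ (p '' C) = ⊤)
    {T : Finset ι} (hT : VertexSet p b T) :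
    T.card = Module.finrank ℝ W ∧
      ∃ c : ι → ℝ, (∀ i, i ∈ T ↔ c i ≠ 0) ∧ ∑ i, c i • p i = u := by
  obtain ⟨a, -, hT, hspan⟩ := hT
  have hli : LinearIndepOn ℝ p (T : Set ι) := hb _ ⟨a, fun i hi => (hT i).1 hi⟩
  constructor
  · have h1 := finrank_span_eq_card hli.linearIndependent
    rw [← finrank_top, ← hspan, Set.image_eq_range]
    simpa using h1.symm
  · obtain ⟨c, hc⟩ := Submodule.mem_span_image_finset_iff_exists_fun' ℝ |>.1
      (show u ∈ Submodule.span ℝ (p '' T) by rw [hspan]; trivial)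
    refine ⟨fun i => if i ∈ T then c i else 0, fun i => ⟨fun hi h0 => ?_, fun h => ?_⟩, ?_⟩
    · replace h0 : c i = 0 := by simpa [hi] using h0
      have hmem : u ∈ Submodule.span ℝ (p '' ((T.erase i : Finset ι) : Set ι)) := by
        refine (Submodule.mem_span_image_finset_iff_exists_fun' ℝ).2 ⟨c, ?_⟩
        rw [← hc, ← Finset.add_sum_erase T _ hi, h0, zero_smul, zero_add]
      have htop := hu _ hmem
      have : p i ∈ Submodule.span ℝ (p '' ((T : Set ι) \ {i})) := by
        rw [← Finset.coe_erase, htop]; trivial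
      exact hli.notMem_span hi this
    · by_contra hi
      simp [hi] at h
    · rw [← hc]
      simp only [ite_smul, zero_smul]
      rw [← Finset.sum_filter]
      exact Finset.sum_congr (by ext; simp) fun _ _ => rfl

/-- `a₁` maximises evaluation at `u` among the feasible `a₂` that are tight wherever `u` has a
negative coefficient in the basis `T₁`, since `a₁ u - a₂ u = ∑ i, c i * (b i - a₂ (p i))`; in the case
of equality, `a₂` is tight on all of `T₁`. -/
lemma subset_of_extremal {ι W : Type*} [Fintype ι] [AddCommGroup W] [Module ℝ W]
    {p : ι → W} {b : ι → ℝ} {u : W} {T₁ T₂ : Finset ι} {a₁ a₂ : Module.Dual ℝ W}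
    (h₂ : ∀ i, a₂ (p i) ≤ b i)
    (hT₁ : ∀ i, i ∈ T₁ ↔ a₁ (p i) = b i) (hT₂ : ∀ i, i ∈ T₂ ↔ a₂ (p i) = b i)
    {c : ι → ℝ} (hc : ∀ i, i ∈ T₁ ↔ c i ≠ 0) (hu : ∑ i, c i • p i = u)
    (hneg : ∀ i, c i < 0 → i ∈ T₂) :
    a₂ u ≤ a₁ u ∧ (a₂ u = a₁ u → T₁ ⊆ T₂) := by
  have hdiff : a₁ u - a₂ u = ∑ i, c i * (b i - a₂ (p i)) := by
    rw [← hu]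
    simp only [map_sum, map_smul, smul_eq_mul, ← Finset.sum_sub_distrib]
    refine Finset.sum_congr rfl fun i _ => ?_
    by_cases hi : i ∈ T₁
    · rw [(hT₁ i).1 hi]; ring
    · have : c i = 0 := by simpa using fun h => hi ((hc i).2 h)
      rw [this]; ring
  have hterm : ∀ i ∈ Finset.univ, 0 ≤ c i * (b i - a₂ (p i)) := by
    intro i _
    rcases lt_or_ge (c i) 0 with h | h
    · rw [(hT₂ i).1 (hneg i h)]; simp
    · exact mul_nonneg h (sub_nonneg.2 (h₂ i))
  refine ⟨by have := Finset.sum_nonneg hterm; linarith, fun heq i hi => ?_⟩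
  have hz := (Finset.sum_eq_zero_iff_of_nonneg hterm).1 (by rw [← hdiff]; linarith) i
    (Finset.mem_univ i)
  rw [hT₂]
  rcases mul_eq_zero.1 hz with h | h
  · exact ((hc i).1 hi h).elim
  · linarith

/-- The tight set of a vertex is determined by the set of negative coefficients of `u` in it. -/
lemma eq_of_extremal {ι W : Type*} [Fintype ι] [AddCommGroup W] [Module ℝ W]
    {p : ι → W} {b : ι → ℝ} {u : W} {T₁ T₂ : Finset ι}
    (h₁ : VertexSet p b T₁) (h₂ : VertexSet p b T₂)
    {c₁ c₂ : ι → ℝ} (hc₁ : ∀ i, i ∈ T₁ ↔ c₁ i ≠ 0) (hc₂ : ∀ i, i ∈ T₂ ↔ c₂ i ≠ 0)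
    (hu₁ : ∑ i, c₁ i • p i = u) (hu₂ : ∑ i, c₂ i • p i = u)
    (hneg : ∀ i, c₁ i < 0 ↔ c₂ i < 0) : T₁ = T₂ := by
  obtain ⟨a₁, hf₁, ht₁, -⟩ := h₁
  obtain ⟨a₂, hf₂, ht₂, -⟩ := h₂
  obtain ⟨hle, hsub⟩ := subset_of_extremal hf₂ ht₁ ht₂ hc₁ hu₁
    fun i hi => (hc₂ i).2 ((hneg i).1 hi).ne
  obtain ⟨hle', hsub'⟩ := subset_of_extremal hf₁ ht₂ ht₁ hc₂ hu₂
    fun i hi => (hc₁ i).2 ((hneg i).2 hi).ne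
  have heq := le_antisymm hle hle'
  exact (hsub heq).antisymm (hsub' heq.symm)

lemma card_small_finsets_le {ι : Type*} [Fintype ι] [DecidableEq ι] (h : ℕ) :
    (Finset.univ.filter fun R : Finset ι => R.card ≤ h).card ≤ (Fintype.card ι + 1) ^ h := by
  have : (Finset.univ.filter fun R : Finset ι => R.card ≤ h) ⊆
      (Finset.univ : Finset (Fin h → Option ι)).image
        (fun f => Finset.univ.filter fun i => ∃ j, f j = some i) := by
    intro R hR
    rw [Finset.mem_filter] at hR
    simp only [Finset.mem_image, Finset.mem_univ, true_and]
    refine ⟨fun j => if hj : (j : ℕ) < R.card then some (R.equivFin.symm ⟨j, hj⟩ : ι) else none, ?_⟩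
    ext i
    simp only [Finset.mem_filter, Finset.mem_univ, true_and]
    constructor
    · rintro ⟨j, hj⟩
      split_ifs at hj with hlt
      simp only [Option.some.injEq] at hj
      rw [← hj]
      exact Subtype.coe_prop _
    · intro hi
      refine ⟨⟨R.equivFin ⟨i, hi⟩, (R.equivFin ⟨i, hi⟩).2.trans_le hR.2⟩, ?_⟩
      simp
  refine (Finset.card_le_card this).trans (Finset.card_image_le.trans ?_)
  simp

open Classical in
lemma card_vertexSets_le {ι W : Type*} [Fintype ι] [AddCommGroup W] [Module ℝ W]
    {p : ι → W} {b : ι → ℝ}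
    (hb : ∀ C : Set ι, (∃ a : Module.Dual ℝ W, ∀ i ∈ C, a (p i) = b i) → LinearIndepOn ℝ p C) :
    (Finset.univ.filter fun T : Finset ι => VertexSet p b T).card ≤
      2 * (Fintype.card ι + 1) ^ (Module.finrank ℝ W / 2) := by
  obtain ⟨u, hu⟩ := generic_direction p
  have hex := fun T : Finset ι => fun hT : VertexSet p b T => (vertexSet_coeff hb hu hT).2
  have hex' : ∀ T : Finset ι, ∃ c : ι → ℝ, VertexSet p b T →
      (∀ i, i ∈ T ↔ c i ≠ 0) ∧ ∑ i, c i • p i = u := by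
    intro T
    by_cases hT : VertexSet p b T
    · obtain ⟨c, hc⟩ := hex T hT
      exact ⟨c, fun _ => hc⟩
    · exact ⟨0, fun h => (hT h).elim⟩
  choose c hc using hex'
  set d := Module.finrank ℝ W
  let N : Finset ι → Finset ι := fun T => Finset.univ.filter fun i => c T i < 0
  let Q : Finset ι → Finset ι := fun T => Finset.univ.filter fun i => -c T i < 0
  have hsplit : ∀ T, VertexSet p b T → (N T).card + (Q T).card = d := by
    intro T hT
    rw [show d = T.card from (vertexSet_coeff hb hu hT).1.symm, ← Finset.card_union_of_disjoint]
    · congr 1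
      ext i
      simp [N, Q, (hc T hT).1 i, lt_or_lt_iff_ne]
    · rw [Finset.disjoint_left]
      intro i
      simp only [N, Q, Finset.mem_filter, Finset.mem_univ, true_and]
      intro h h'
      linarith
  -- encode a vertex by the smaller one of its two sign classes, together with the sign
  let code : Finset ι → Bool × Finset ι := fun T =>
    if (N T).card ≤ d / 2 then (true, N T) else (false, Q T)
  have hmaps : ∀ T ∈ (Finset.univ.filter fun T : Finset ι => VertexSet p b T),
      code T ∈ (Finset.univ : Finset Bool) ×ˢ
        (Finset.univ.filter fun R : Finset ι => R.card ≤ d / 2) := by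
    intro T hT
    have := hsplit T (by simpa using hT)
    by_cases h : (N T).card ≤ d / 2
    · simp [code, h]
    · simp only [code, h, if_false, Finset.mem_product, Finset.mem_univ, Finset.mem_filter, true_and]
      omega
  have hinj : Set.InjOn code (Finset.univ.filter fun T : Finset ι => VertexSet p b T) := by
    intro T₁ h₁ T₂ h₂ heq
    have h₁ : VertexSet p b T₁ := by simpa using h₁
    have h₂ : VertexSet p b T₂ := by simpa using h₂
    by_cases g₁ : (N T₁).card ≤ d / 2 <;> by_cases g₂ : (N T₂).card ≤ d / 2 <;>
      simp only [code, g₁, g₂, if_true, if_false, Prod.mk.injEq, reduceCtorEq, false_and, true_and]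
        at heq
    · refine eq_of_extremal h₁ h₂ (hc T₁ h₁).1 (hc T₂ h₂).1 (hc T₁ h₁).2 (hc T₂ h₂).2 fun i => ?_
      simpa [N] using Finset.ext_iff.1 heq i
    · refine eq_of_extremal (u := -u) (c₁ := fun i => -c T₁ i) (c₂ := fun i => -c T₂ i) h₁ h₂
        (by simpa using (hc T₁ h₁).1) (by simpa using (hc T₂ h₂).1)
        (by simp [(hc T₁ h₁).2]) (by simp [(hc T₂ h₂).2]) fun i => ?_
      simpa [Q] using Finset.ext_iff.1 heq i
  refine (Finset.card_le_card_of_injOn code hmaps hinj).trans ?_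
  rw [Finset.card_product]
  simpa using card_small_finsets_le (ι := ι) (d / 2)

/-- Asymptotic upper bound theorem for vector configurations: the number of faces, encoded as the
index sets where a functional bounded by `1` on all `p i` attains `1`, is `O(n ^ (dim W / 2))`. -/
lemma ncard_faces_le {ι W : Type*} [Fintype ι] [AddCommGroup W] [Module ℝ W]
    (p : ι → W) (hp : Submodule.span ℝ (Set.range p) = ⊤) (𝓕 : Set (Set ι))
    (h𝓕 : ∀ F ∈ 𝓕, ∃ a : Module.Dual ℝ W, (∀ i, a (p i) ≤ 1) ∧ F = {i | a (p i) = 1}) :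
    𝓕.ncard ≤ 2 * (Fintype.card ι + 1) ^ (Module.finrank ℝ W / 2) * 2 ^ Module.finrank ℝ W := by
  classical
  obtain ⟨e, he⟩ := generic_perturbation p
  have hall : ∀ᶠ t in nhdsWithin (0 : ℝ) (Set.Ioi 0), ∀ F : Set ι, F ∈ 𝓕 →
      ∃ a : Module.Dual ℝ W, (∀ i, a (p i) ≤ 1 + t * e i) ∧
      Submodule.span ℝ (p '' {i | a (p i) = 1 + t * e i}) = ⊤ ∧
      ∃ S ⊆ F, S ⊆ {i | a (p i) = 1 + t * e i} ∧ ∀ i ∈ F, p i ∈ Submodule.span ℝ (p '' S) := by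
    rw [Filter.eventually_all]
    intro F
    by_cases hF : F ∈ 𝓕
    · obtain ⟨a₀, h₀, h₁⟩ := h𝓕 F hF
      filter_upwards [eventually_exists_vertex p hp e F a₀ h₀ h₁] with t ht _ using ht
    · exact Filter.Eventually.of_forall fun _ h => (hF h).elim
  obtain ⟨t, hgen, hvert⟩ := (he.and hall).exists
  set b : ι → ℝ := fun i => 1 + t * e i
  have hS : ∀ F : Set ι, ∃ S : Finset ι, F ∈ 𝓕 → (∃ T, VertexSet p b T ∧ S ⊆ T) ∧ (S : Set ι) ⊆ F ∧
      ∀ i ∈ F, p i ∈ Submodule.span ℝ (p '' S) := by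
    intro F
    by_cases hF : F ∈ 𝓕
    · obtain ⟨a, h1, h2, S, h3, h4, h5⟩ := hvert F hF
      refine ⟨S.toFinset, fun _ => ⟨⟨Finset.univ.filter fun i => a (p i) = b i, ⟨a, h1, ?_, ?_⟩, ?_⟩,
        by simpa using h3, by simpa using h5⟩⟩
      · simp
      · simpa using h2
      · intro i hi
        simpa using h4 (Set.mem_toFinset.1 hi)
    · exact ⟨∅, fun h => (hF h).elim⟩
  choose S hS using hS
  set 𝒯 := Finset.univ.filter fun T : Finset ι => VertexSet p b T
  have hcard : (𝒯.biUnion Finset.powerset).card ≤ 𝒯.card * 2 ^ Module.finrank ℝ W := by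
    refine Finset.card_biUnion_le_card_mul _ _ _ fun T hT => ?_
    obtain ⟨u, hu⟩ := generic_direction p
    rw [Finset.card_powerset, (vertexSet_coeff hgen hu (by simpa [𝒯] using hT)).1]
  -- a face is recovered from `S`: exposing functionals of two faces sharing `S` agree on its span
  have hsub : ∀ F₁ ∈ 𝓕, ∀ F₂ ∈ 𝓕, S F₁ = S F₂ → F₁ ⊆ F₂ := by
    intro F₁ h₁ F₂ h₂ heq i hi
    obtain ⟨a₁, -, ha₁⟩ := h𝓕 F₁ h₁
    obtain ⟨a₂, -, ha₂⟩ := h𝓕 F₂ h₂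
    have hagree : Set.EqOn a₁ a₂ (Submodule.span ℝ (p '' S F₁)) := by
      apply LinearMap.eqOn_span
      rintro _ ⟨j, hj, rfl⟩
      have hj₁ : j ∈ F₁ := (hS F₁ h₁).2.1 hj
      have hj₂ : j ∈ F₂ := (hS F₂ h₂).2.1 (heq ▸ hj)
      rw [ha₁] at hj₁
      rw [ha₂] at hj₂
      exact hj₁.trans hj₂.symm
    have h := hagree ((hS F₁ h₁).2.2 i hi)
    rw [ha₁] at hi
    rw [ha₂]
    exact h.symm.trans hi
  have hle : 𝓕.ncard ≤ (𝒯.biUnion Finset.powerset).card := by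
    rw [← Set.ncard_coe_finset]
    refine Set.ncard_le_ncard_of_injOn S ?_ ?_ (Set.toFinite _)
    · intro F hF
      obtain ⟨T, hT, hST⟩ := (hS F hF).1
      simp only [Finset.coe_biUnion, Set.mem_iUnion]
      exact ⟨T, by simpa [𝒯] using hT, by simpa using hST⟩
    · intro F₁ h₁ F₂ h₂ heq
      exact (hsub F₁ h₁ F₂ h₂ heq).antisymm (hsub F₂ h₂ F₁ h₁ heq.symm)
  exact hle.trans (hcard.trans (Nat.mul_le_mul_right _ (card_vertexSets_le hgen)))

/-! ### Exposed faces of polytopes -/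

section
variable {E : Type*} [NormedAddCommGroup E] [NormedSpace ℝ E]

lemma exposed_functional {C F : Set E} (hF : IsExposed ℝ C F) (hne : F.Nonempty) :
    ∃ (l : E →L[ℝ] ℝ) (s : ℝ), (∀ x ∈ C, l x ≤ s) ∧ ∀ x, x ∈ F ↔ x ∈ C ∧ l x = s := by
  obtain ⟨l, rfl⟩ := hF hne
  obtain ⟨x₀, hx₀, hmax⟩ := hne
  refine ⟨l, l x₀, hmax, fun x => ⟨fun hx => ⟨hx.1, le_antisymm (hmax x hx.1) (hx.2 x₀ hx₀)⟩,
    fun hx => ⟨hx.1, fun y hy => hx.2 ▸ hmax y hy⟩⟩⟩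

/-- The vertices of a face of a polytope are vertices of the polytope, and span the face. -/
lemma exposed_subset_convexHull {A F : Set E} (hA : A.Finite)
    (hF : IsExposed ℝ (convexHull ℝ A) F) :
    F.extremePoints ℝ ⊆ A ∩ (convexHull ℝ A).extremePoints ℝ ∧
      F = convexHull ℝ (F.extremePoints ℝ) := by
  have hsub : F.extremePoints ℝ ⊆ (convexHull ℝ A).extremePoints ℝ :=
    hF.isExtreme.extremePoints_subset_extremePoints
  have hsubA : F.extremePoints ℝ ⊆ A := hsub.trans extremePoints_convexHull_subset
  refine ⟨subset_inter hsubA hsub, ?_⟩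
  have hcomp : IsCompact F := hF.isCompact (hA.isCompact_convexHull ℝ)
  have hconv : Convex ℝ F := hF.convex (convex_convexHull ℝ A)
  have := closure_convexHull_extremePoints hcomp hconv
  rw [((hA.subset hsubA).isClosed_convexHull ℝ).closure_eq] at this
  exact this.symm

lemma eq_of_mem_affineSpan (l : E →ₗ[ℝ] ℝ) (s : ℝ) {B : Set E} (hB : ∀ x ∈ B, l x = s)
    {x : E} (hx : x ∈ affineSpan ℝ B) : l x = s := by
  have hle : affineSpan ℝ B ≤ (AffineSubspace.mk' s (⊥ : Submodule ℝ ℝ)).comap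
      l.toAffineMap := by
    rw [affineSpan_le]
    intro y hy
    simp [hB y hy]
  simpa [sub_eq_zero] using hle hx

lemma exposed_eq_of_affineSpan_eq {C F G : Set E} (hF : IsExposed ℝ C F) (hFn : F.Nonempty)
    (hG : IsExposed ℝ C G) (hGn : G.Nonempty) (h : affineSpan ℝ F = affineSpan ℝ G) : F = G := by
  have key : ∀ {F G : Set E}, IsExposed ℝ C F → IsExposed ℝ C G → G.Nonempty →
      affineSpan ℝ F = affineSpan ℝ G → F ⊆ G := by
    intro F G hF hG hGn h x hx
    obtain ⟨l, s, -, hl⟩ := exposed_functional hG hGn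
    refine (hl x).2 ⟨hF.subset hx, ?_⟩
    exact eq_of_mem_affineSpan (l : E →ₗ[ℝ] ℝ) s (fun y hy => ((hl y).1 hy).2)
      (h ▸ subset_affineSpan ℝ F hx)
  exact (key hF hG hGn h).antisymm (key hG hF hFn h.symm)

lemma exists_spanning_tuple [FiniteDimensional ℝ E] {F : Set E} {k : ℕ} (B : Set E)
    (hne : F.Nonempty) (hB : F = convexHull ℝ B) (hk : Module.finrank ℝ (vectorSpan ℝ F) = k) :
    ∃ s : Fin (k + 1) → E, (∀ j, s j ∈ B) ∧ affineSpan ℝ (range s) = affineSpan ℝ F := by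
  obtain ⟨t, htB, hspan, hind⟩ := exists_affineIndependent ℝ E B
  have hFB : affineSpan ℝ F = affineSpan ℝ B := by rw [hB, affineSpan_convexHull]
  have hfin : t.Finite := finite_set_of_fin_dim_affineIndependent ℝ hind
  have htne : t.Nonempty := by
    rw [← affineSpan_nonempty ℝ, hspan, ← hFB, affineSpan_nonempty]; exact hne
  have := hfin.fintype
  have := htne.to_subtype
  have hcard : Fintype.card t = k + 1 := by
    rw [← hind.finrank_vectorSpan_add_one, Subtype.range_coe, ← hk, ← direction_affineSpan,
      ← direction_affineSpan, hspan, hFB]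
  refine ⟨fun j => ((Fintype.equivFinOfCardEq hcard).symm j : E), fun j => htB (Subtype.coe_prop _), ?_⟩
  rw [hFB, ← hspan]
  congr 1
  ext x
  constructor
  · rintro ⟨j, rfl⟩; exact Subtype.coe_prop _
  · intro hx
    exact ⟨Fintype.equivFinOfCardEq hcard ⟨x, hx⟩, by simp⟩

/-- Upper bound for the number of `k`-faces of the `d`-polytope `conv V`, `k < d`. Each member of `𝒢`
is given as the hull of points of `V`, together with a functional `l ≤ s` exposing it. -/
lemma ncard_exposed_le {d k : ℕ} (hk : k < d) (V : Finset E)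
    (hdim : Module.finrank ℝ (vectorSpan ℝ (V : Set E)) = d) (𝒢 : Set (Set E))
    (h𝒢 : ∀ F ∈ 𝒢, ∃ (l : E →ₗ[ℝ] ℝ) (s : ℝ) (B : Set E), B ⊆ V ∧ F = convexHull ℝ B ∧
      Module.finrank ℝ (vectorSpan ℝ F) = k ∧
      (∀ x ∈ V, l x ≤ s) ∧ ∀ x ∈ V, x ∈ F ↔ l x = s) :
    𝒢.ncard ≤ 2 * (V.card + 1) ^ (d / 2) * 2 ^ d := by
  classical
  have hVne : V.Nonempty := by
    by_contra h
    rw [Finset.not_nonempty_iff_eq_empty] at h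
    rw [h, Finset.coe_empty, vectorSpan_empty, finrank_bot] at hdim
    omega
  have hpos : (0 : ℝ) < V.card := by exact_mod_cast hVne.card_pos
  set W := vectorSpan ℝ (V : Set E) with hW
  -- the centroid serves as origin: it lies strictly below the supporting hyperplane of a proper face
  set o : E := (V.card : ℝ)⁻¹ • ∑ v ∈ V, v with ho
  have hmem : ∀ v ∈ V, v - o ∈ W := by
    intro v hv
    have : v - o = (V.card : ℝ)⁻¹ • ∑ w ∈ V, (v - w) := by
      rw [Finset.sum_sub_distrib, smul_sub, ← ho, Finset.sum_const, ← Nat.cast_smul_eq_nsmul ℝ,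
        smul_smul, inv_mul_cancel₀ hpos.ne', one_smul]
    rw [this]
    exact W.smul_mem _ (W.sum_mem fun w hw => vsub_mem_vectorSpan ℝ hv hw)
  let p : V → W := fun v => ⟨v - o, hmem v v.2⟩
  have hp : Submodule.span ℝ (range p) = ⊤ := by
    have hle : W ≤ (Submodule.span ℝ (range p)).map W.subtype := by
      refine Submodule.span_le.2 ?_
      rintro _ ⟨v, hv, w, hw, rfl⟩
      refine ⟨p ⟨v, hv⟩ - p ⟨w, hw⟩, Submodule.sub_mem _ (Submodule.subset_span ⟨_, rfl⟩)
        (Submodule.subset_span ⟨_, rfl⟩), ?_⟩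
      simp [p]
    rw [eq_top_iff]
    rintro ⟨x, hx⟩ -
    obtain ⟨y, hy, hyx⟩ := hle hx
    have : y = ⟨x, hx⟩ := Subtype.ext hyx
    exact this ▸ hy
  let Φ : Set E → Set V := fun F => {v | (v : E) ∈ F}
  have hinj : InjOn Φ 𝒢 := by
    have key : ∀ F ∈ 𝒢, F = convexHull ℝ ((↑) '' Φ F) := by
      intro F hF
      obtain ⟨l, s, B, hBV, hFB, -⟩ := h𝒢 F hF
      apply Subset.antisymm
      · conv_lhs => rw [hFB]
        refine convexHull_mono fun x hx => ⟨⟨x, hBV hx⟩, ?_, rfl⟩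
        change x ∈ F
        rw [hFB]
        exact subset_convexHull ℝ B hx
      · refine convexHull_min ?_ (hFB ▸ convex_convexHull ℝ B)
        rintro _ ⟨v, hv, rfl⟩
        exact hv
    intro F hF G hG h
    rw [key F hF, key G hG, h]
  rw [← hinj.ncard_image]
  have hmain := ncard_faces_le p hp (Φ '' 𝒢) ?_
  · simpa [hdim] using hmain
  rintro _ ⟨F, hF, rfl⟩
  obtain ⟨l, s, B, hBV, hFB, hFk, hls, hFl⟩ := h𝒢 F hF
  have hlo : l o < s := by
    have hex : ∃ v ∈ V, l v < s := by
      by_contra! hcon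
      have hVF : (V : Set E) ⊆ F := fun v hv => (hFl v hv).2 (le_antisymm (hls v hv) (hcon v hv))
      have hspan : vectorSpan ℝ F = W := by
        rw [← direction_affineSpan, hFB, affineSpan_convexHull, direction_affineSpan]
        apply le_antisymm (vectorSpan_mono ℝ hBV)
        have := vectorSpan_mono ℝ hVF
        rwa [hFB, ← direction_affineSpan ℝ (convexHull ℝ B), affineSpan_convexHull,
          direction_affineSpan] at this
      rw [hspan, hdim] at hFk
      omega
    have hlt : ∑ v ∈ V, l v < ∑ v ∈ V, s := Finset.sum_lt_sum hls hex
    rw [Finset.sum_const, nsmul_eq_mul] at hlt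
    rw [ho, map_smul, map_sum, smul_eq_mul, inv_mul_lt_iff₀ hpos]
    exact hlt
  -- normalise `l` so that, with origin `o`, the supporting hyperplane is at height `1`
  refine ⟨(s - l o)⁻¹ • l ∘ₗ W.subtype, fun v => ?_, ?_⟩
  · simp only [p, LinearMap.smul_apply, LinearMap.comp_apply, Submodule.subtype_apply, smul_eq_mul,
      map_sub]
    rw [inv_mul_le_iff₀ (by linarith)]
    linarith [hls v v.2]
  · ext v
    simp only [Φ, p, LinearMap.smul_apply, LinearMap.comp_apply, Submodule.subtype_apply,
      smul_eq_mul, map_sub, mem_ofPred_eq]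
    rw [hFl v v.2, inv_mul_eq_iff_eq_mul₀ (by linarith)]
    constructor <;> intro h <;> linarith
end

/-! ### Colour patterns -/

/-- Take `j` to be the colour of the largest factor, `i` any other colour occurring. -/
lemma prod_le_of_nonconstant {m k : ℕ} (n : Fin m → ℕ) (c : Fin (k + 1) → Fin m)
    (hc : ¬ ∃ i, ∀ j, c j = i) : ∃ i j, i ≠ j ∧ ∏ r, n (c r) ≤ n i * n j ^ k := by
  obtain ⟨r₀, -, hr₀⟩ := Finset.exists_max_image Finset.univ (fun r => n (c r)) ⟨0, by simp⟩
  push Not at hc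
  obtain ⟨r₁, hr₁⟩ := hc (c r₀)
  refine ⟨c r₁, c r₀, hr₁, ?_⟩
  rw [← Finset.mul_prod_erase Finset.univ _ (Finset.mem_univ r₁)]
  refine Nat.mul_le_mul_left _ ((Finset.prod_le_pow_card _ _ _ fun r _ => hr₀ r (by simp)).trans ?_)
  simp

/-- The arithmetic of the bound: `g c` stands for the number of faces with colour pattern `c`, and
each of the at most `m ^ (d + 1)` patterns contributes at most `2 ^ (2 * d + 1)` times the bracket. -/
lemma sum_face_counts_le {d m k : ℕ} (hm : 1 ≤ m) (hk : k ≤ d / 2) (n : Fin m → ℕ)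
    (hpos : ∀ i, 1 ≤ n i) (g : (Fin (k + 1) → Fin m) → ℕ) (hprod : ∀ c, g c ≤ ∏ j, n (c j))
    (hconst : ∀ c i, (∀ j, c j = i) → g c ≤ 2 * (n i + 1) ^ (d / 2) * 2 ^ d) :
    ((∑ c, g c : ℕ) : ℝ) ≤ (m : ℝ) ^ (d + 1) * 2 ^ (2 * d + 1) *
      ((∑ i : Fin m, ∑ j : Fin m, if i ≠ j then (n i : ℝ) * (n j : ℝ) ^ k else 0) +
        ∑ i : Fin m, (n i : ℝ) ^ min (k + 1) (d / 2)) := by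
  set X : ℝ := (∑ i : Fin m, ∑ j : Fin m,
      if i ≠ j then (n i : ℝ) * (n j : ℝ) ^ k else 0) +
      ∑ i : Fin m, (n i : ℝ) ^ min (k + 1) (d / 2) with hX
  have hterm : ∀ i j : Fin m,
      0 ≤ if i ≠ j then (n i : ℝ) * (n j : ℝ) ^ k else 0 := by
    intro i j
    split_ifs <;> positivity
  have hX1 : ∀ i j, i ≠ j → (n i : ℝ) * (n j : ℝ) ^ k ≤ X := by
    intro i j hij
    have h1 := Finset.single_le_sum (fun j _ => hterm i j) (Finset.mem_univ j)
    have h2 := Finset.single_le_sum (f := fun i => ∑ j : Fin m,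
      if i ≠ j then (n i : ℝ) * (n j : ℝ) ^ k else 0)
      (fun i _ => Finset.sum_nonneg fun j _ => hterm i j) (Finset.mem_univ i)
    have h3 : 0 ≤ ∑ i : Fin m, (n i : ℝ) ^ min (k + 1) (d / 2) := by positivity
    rw [if_pos hij] at h1
    linarith
  have hX2 : ∀ i, (n i : ℝ) ^ min (k + 1) (d / 2) ≤ X := by
    intro i
    have h1 := Finset.single_le_sum (f := fun i => (n i : ℝ) ^ min (k + 1) (d / 2))
      (fun i _ => by positivity) (Finset.mem_univ i)
    have h2 := Finset.sum_nonneg fun i (_ : i ∈ Finset.univ) =>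
      Finset.sum_nonneg fun j (_ : j ∈ Finset.univ) => hterm i j
    linarith
  have hX0 : 0 ≤ X := le_trans (by positivity) (hX2 ⟨0, by omega⟩)
  have hone : (1 : ℝ) ≤ 2 ^ (2 * d + 1) := one_le_pow₀ (by norm_num)
  have hbound : ∀ c, (g c : ℝ) ≤ 2 ^ (2 * d + 1) * X := by
    intro c
    have hp : (g c : ℝ) ≤ ((∏ j, n (c j) : ℕ) : ℝ) := by
      exact_mod_cast hprod c
    by_cases hc : ∃ i, ∀ j, c j = i
    · obtain ⟨i, hi⟩ := hc
      by_cases hkd : k + 1 ≤ d / 2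
      · have h1 : ((∏ j, n (c j) : ℕ) : ℝ) = (n i : ℝ) ^ min (k + 1) (d / 2) := by
          simp [hi, min_eq_left hkd]
        have := hX2 i
        nlinarith
      · have hmin : min (k + 1) (d / 2) = d / 2 := min_eq_right (by omega)
        have h1 : (g c : ℝ) ≤ 2 * (n i + 1 : ℝ) ^ (d / 2) * 2 ^ d := by
          exact_mod_cast hconst c i hi
        have hn : (1 : ℝ) ≤ n i := by exact_mod_cast hpos i
        have h2 : (n i + 1 : ℝ) ^ (d / 2) ≤ 2 ^ d * X := by
          calc (n i + 1 : ℝ) ^ (d / 2) ≤ (2 * n i : ℝ) ^ (d / 2) := by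
                gcongr; linarith
            _ = 2 ^ (d / 2) * (n i : ℝ) ^ (d / 2) := mul_pow _ _ _
            _ ≤ 2 ^ d * X := by
                have h3 := hX2 i
                rw [hmin] at h3
                gcongr
                · norm_num
                · omega
        calc (g c : ℝ) ≤ 2 * (n i + 1 : ℝ) ^ (d / 2) * 2 ^ d := h1
          _ ≤ 2 * (2 ^ d * X) * 2 ^ d := by gcongr
          _ = 2 ^ (2 * d + 1) * X := by ring
    · obtain ⟨i, j, hij, hle⟩ := prod_le_of_nonconstant n c hc
      have h1 : ((∏ j, n (c j) : ℕ) : ℝ) ≤ (n i : ℝ) * (n j : ℝ) ^ k := by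
        exact_mod_cast hle
      have := hX1 i j hij
      nlinarith
  calc ((∑ c, g c : ℕ) : ℝ) = ∑ c, (g c : ℝ) := by push_cast; rfl
    _ ≤ ∑ _c : Fin (k + 1) → Fin m, 2 ^ (2 * d + 1) * X := Finset.sum_le_sum fun c _ => hbound c
    _ = (m : ℝ) ^ (k + 1) * (2 ^ (2 * d + 1) * X) := by simp
    _ ≤ (m : ℝ) ^ (d + 1) * (2 ^ (2 * d + 1) * X) := by
        gcongr
        · exact_mod_cast (by omega : 1 ≤ m)
        · omega
    _ = (m : ℝ) ^ (d + 1) * 2 ^ (2 * d + 1) * X := by ring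

/-- The `k`-faces of the big polytope are distributed over colour patterns `c`, `g c` of them having
`k + 1` affinely spanning vertices with the `j`-th one a vertex of `conv (P (c j))`. Faces with a
constant pattern `i` lie in `Πᵢ` and are faces of `conv (P i)`. -/
lemma exists_face_counts {E : Type*} [NormedAddCommGroup E] [InnerProductSpace ℝ E]
    [FiniteDimensional ℝ E] {d m k : ℕ} (hk : k < d) (u : E) (t : Fin m → ℝ) (P : Fin m → Set E)
    (ht : Function.Injective t) (hfin : ∀ i, (P i).Finite) (hP : ∀ i, P i ⊆ {x | ⟪x, u⟫ = t i})
    (hdim : ∀ i, Module.finrank ℝ (vectorSpan ℝ (convexHull ℝ (P i))) = d) :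
    ∃ g : (Fin (k + 1) → Fin m) → ℕ,
      {F : Set E | IsExposed ℝ (convexHull ℝ (⋃ i, P i)) F ∧ F.Nonempty ∧
        Module.finrank ℝ (vectorSpan ℝ F) = k}.ncard ≤ ∑ c, g c ∧
      (∀ c, g c ≤ ∏ j, ((convexHull ℝ (P (c j))).extremePoints ℝ).ncard) ∧
      ∀ c i, (∀ j, c j = i) →
        g c ≤ 2 * (((convexHull ℝ (P i)).extremePoints ℝ).ncard + 1) ^ (d / 2) * 2 ^ d := by
  classical
  have hVfin : ∀ i, ((convexHull ℝ (P i)).extremePoints ℝ).Finite := fun i =>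
    (hfin i).subset extremePoints_convexHull_subset
  let V : Fin m → Finset E := fun i => (hVfin i).toFinset
  have hVmem : ∀ i x, x ∈ V i ↔ x ∈ (convexHull ℝ (P i)).extremePoints ℝ := fun i x => by simp [V]
  have hVcoe : ∀ i, (V i : Set E) = (convexHull ℝ (P i)).extremePoints ℝ := fun i => by simp [V]
  have hVcard : ∀ i, ((convexHull ℝ (P i)).extremePoints ℝ).ncard = (V i).card := fun i => by
    rw [← hVcoe, Set.ncard_coe_finset]
  simp only [hVcard]
  have hVP : ∀ i, ∀ x ∈ V i, x ∈ P i := fun i x hx =>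
    extremePoints_convexHull_subset ((hVmem i x).1 hx)
  have hUfin : (⋃ i, P i).Finite := Set.finite_iUnion hfin
  have hsubU : ∀ i, convexHull ℝ (P i) ⊆ convexHull ℝ (⋃ i, P i) := fun i =>
    convexHull_mono (Set.subset_iUnion P i)
  have hVdim : ∀ i, Module.finrank ℝ (vectorSpan ℝ (V i : Set E)) = d := by
    intro i
    have h1 := (exposed_subset_convexHull (hfin i) (IsExposed.refl (𝕜 := ℝ) _)).2
    have h2 := hdim i
    rw [h1, ← direction_affineSpan, affineSpan_convexHull, direction_affineSpan] at h2
    rw [hVcoe]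
    exact h2
  -- a point of `P i` that is a vertex of the big polytope is a vertex of `conv (P i)`
  have hext : ∀ i x, x ∈ P i → x ∈ (convexHull ℝ (⋃ i, P i)).extremePoints ℝ → x ∈ V i :=
    fun i x hx hxe => (hVmem i x).2 (inter_extremePoints_subset_extremePoints_of_subset (hsubU i)
      ⟨subset_convexHull ℝ _ hx, hxe⟩)
  set 𝒦 : Set (Set E) :=
    {F | IsExposed ℝ (convexHull ℝ (⋃ i, P i)) F ∧ F.Nonempty ∧
      Module.finrank ℝ (vectorSpan ℝ F) = k} with h𝒦
  let 𝒦c : (Fin (k + 1) → Fin m) → Set (Set E) := fun c =>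
    {F ∈ 𝒦 | ∃ s : Fin (k + 1) → E, (∀ j, s j ∈ V (c j)) ∧
      affineSpan ℝ (range s) = affineSpan ℝ F}
  have hcover : 𝒦 ⊆ ⋃ c, 𝒦c c := by
    intro F hF
    obtain ⟨hFe, hFn, hFk⟩ := hF
    obtain ⟨hB, hFB⟩ := exposed_subset_convexHull hUfin hFe
    obtain ⟨s, hs, hspan⟩ := exists_spanning_tuple _ hFn hFB hFk
    have hcol : ∀ j, ∃ i, s j ∈ V i := by
      intro j
      obtain ⟨h1, h2⟩ := hB (hs j)
      obtain ⟨i, hi⟩ := Set.mem_iUnion.1 h1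
      exact ⟨i, hext i _ hi h2⟩
    choose c hc using hcol
    exact Set.mem_iUnion.2 ⟨c, ⟨hFe, hFn, hFk⟩, s, hc, hspan⟩
  have hprod : ∀ c, (𝒦c c).Finite ∧ (𝒦c c).ncard ≤ ∏ j, (V (c j)).card := by
    intro c
    have hex : ∀ F : Set E, ∃ s : Fin (k + 1) → E, F ∈ 𝒦c c → (∀ j, s j ∈ V (c j)) ∧
        affineSpan ℝ (range s) = affineSpan ℝ F := by
      intro F
      by_cases hF : F ∈ 𝒦c c
      · obtain ⟨-, s, hs⟩ := hF
        exact ⟨s, fun _ => hs⟩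
      · exact ⟨0, fun h => (hF h).elim⟩
    choose S hS using hex
    have hmaps : Set.MapsTo S (𝒦c c) (Fintype.piFinset fun j => V (c j)) := by
      intro F hF
      simpa using (hS F hF).1
    have hinj : Set.InjOn S (𝒦c c) := by
      intro F hF G hG h
      refine exposed_eq_of_affineSpan_eq hF.1.1 hF.1.2.1 hG.1.1 hG.1.2.1 ?_
      rw [← (hS F hF).2, ← (hS G hG).2, h]
    refine ⟨Set.Finite.of_injOn hmaps hinj (Finset.finite_toSet _), ?_⟩
    have := Set.ncard_le_ncard_of_injOn S hmaps hinj (Finset.finite_toSet _)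
    rwa [Set.ncard_coe_finset, Fintype.card_piFinset] at this
  have hconst : ∀ c i, (∀ j, c j = i) →
      (𝒦c c).ncard ≤ 2 * ((V i).card + 1) ^ (d / 2) * 2 ^ d := by
    intro c i hc
    refine ncard_exposed_le hk (V i) (hVdim i) _ ?_
    rintro F ⟨⟨hFe, hFn, hFk⟩, s, hs, hspan⟩
    obtain ⟨hB, hFB⟩ := exposed_subset_convexHull hUfin hFe
    obtain ⟨l, r, hlr, hl⟩ := exposed_functional hFe hFn
    have hplane : ∀ x ∈ F, ⟪x, u⟫ = t i := by
      intro x hx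
      have hx' : x ∈ affineSpan ℝ (range s) := hspan ▸ subset_affineSpan ℝ F hx
      have := eq_of_mem_affineSpan (innerSL ℝ u : E →ₗ[ℝ] ℝ) (t i) (B := range s) (by
        rintro _ ⟨j, rfl⟩
        have := hP i (hVP i _ (hc j ▸ hs j))
        rw [Set.mem_ofPred_eq, real_inner_comm] at this
        simpa using this) hx'
      rw [real_inner_comm]
      simpa using this
    refine ⟨l, r, F.extremePoints ℝ, ?_, hFB, hFk, ?_, ?_⟩
    · intro x hx
      obtain ⟨h1, h2⟩ := hB hx
      obtain ⟨j, hj⟩ := Set.mem_iUnion.1 h1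
      have hji : j = i := ht ((hP j hj).symm.trans (hplane x hx.1))
      exact hext i x (hji ▸ hj) h2
    · exact fun x hx => hlr x (hsubU i (subset_convexHull ℝ _ (hVP i x hx)))
    · intro x hx
      rw [hl x]
      exact and_iff_right (hsubU i (subset_convexHull ℝ _ (hVP i x hx)))
  refine ⟨fun c => (𝒦c c).ncard, ?_, fun c => (hprod c).2, hconst⟩
  exact (Set.ncard_le_ncard hcover (Set.finite_iUnion fun c => (hprod c).1)).trans
    (Set.ncard_iUnion_le_of_fintype _)

theorem stmt4 (d m : ℕ) (hd : 2 ≤ d) (hm : 2 ≤ m) :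
    ∃ c : ℝ, 0 < c ∧
      ∀ (u : EuclideanSpace ℝ (Fin (d + 1))) (t : Fin m → ℝ)
        (P : Fin m → Set (EuclideanSpace ℝ (Fin (d + 1)))),
        ‖u‖ = 1 → StrictMono t →
        (∀ i, (P i).Finite) →
        (∀ i, P i ⊆ {x | ⟪x, u⟫ = t i}) →
        (∀ i, adim (convexHull ℝ (P i)) = d) →
        ∀ k, k ≤ d / 2 →
          (fCount (convexHull ℝ (⋃ i, P i)) k : ℝ) ≤
            c * ((∑ i : Fin m, ∑ j : Fin m,
                if i ≠ j then
                  (((convexHull ℝ (P i)).extremePoints ℝ).ncard : ℝ) *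
                    (((convexHull ℝ (P j)).extremePoints ℝ).ncard : ℝ) ^ k
                else 0) +
              ∑ i : Fin m,
                (((convexHull ℝ (P i)).extremePoints ℝ).ncard : ℝ) ^ min (k + 1) (d / 2)) := by
  refine ⟨(m : ℝ) ^ (d + 1) * 2 ^ (2 * d + 1), by positivity, ?_⟩
  intro u t P _ ht hfin hP hdim k hk
  obtain ⟨g, hg, hprod, hconst⟩ :=
    exists_face_counts (k := k) (by omega) u t P ht.injective hfin hP hdim
  refine le_trans (Nat.cast_le.2 hg)
    (sum_face_counts_le (by omega) hk _ (fun i => ?_) g hprod hconst)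
  -- `conv (P i)` is the convex hull of its vertices, so it has one, being of dimension `d ≥ 2`
  have hhull := (exposed_subset_convexHull (hfin i) (IsExposed.refl (𝕜 := ℝ) _)).2
  rw [Nat.one_le_iff_ne_zero, Ne, Set.ncard_eq_zero
    ((hfin i).subset extremePoints_convexHull_subset)]
  intro hempty
  have hd0 := hdim i
  rw [hempty, convexHull_empty] at hhull
  rw [adim, hhull, vectorSpan_empty, finrank_bot] at hd0
  omega
end

section
/- Fix an odd integer d ≥ 3 and an integer m ≥ 2. There exists a constant c > 0, depending only on d and m, such that for any m parallel hyperplanes Π_1, …, Π_m in E^{d+1} and finite sets P_i ⊂ Π_i with each 𝒫_i = conv(P_i) a d-dimensional polytope with n_i vertices, the polytope 𝒫 = conv(P_1 ∪ … ∪ P_m) satisfies, for every ⌊(d+1)/2⌋ ≤ k ≤ d: f_k(𝒫) ≤ c · Σ_{1 ≤ i ≠ j ≤ m} n_i · n_j^{⌊d/2⌋}. (Lemma 2.5.) -/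
/-!
The bound is an upper bound theorem for coloured polytopes, proved on the dual side by linear
programming. Write `d = 2e + 1`.

*Simple polyhedra.* For a system `z (a i) ≤ r i` in a linear functional `z`, let `Cplx a r` be the
family of index sets that are simultaneously tight at some feasible `z`. If tight vectors are always
linearly independent (`Nondeg`) and span dimension `D`, expand a generic vector `c` in the basis of
tight vectors at each vertex. A vertex is determined by the set of tight indices with negative
coefficient, and also by the set of those with positive coefficient; one of the two has at most
`D / 2` elements. Hence `Cplx a r` has at most `2 ^ (D + 1)` times as many members as it has members
of size at most `D / 2` (`Cplx_card_le`).

*Reduction to simple polyhedra.* A face of the polytope that contains no whole slice `𝒫_i` is cut out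
by a functional strictly below its maximum at the centroids `o i` of the slices. After normalization
at the centroid of one slice it becomes a feasible point of a system with constraints at all vertices
and, with a small slack `s`, at all centroids. Perturbing the right-hand sides to `r + ε g` with a
generic `g` makes the system nondegenerate, and every tight set contains a spanning member of the
perturbed complex (`exists_perturbed_face`), so faces inject into the perturbed complex.

*Counting small members.* With `D ≤ 2e + 2` only members of size at most `e + 1` matter. Those
meeting two slices number `O(∑_{i ≠ j} n_i n_j ^ e)` for trivial reasons (`card_mixed`). Those inside
slice `i` belong, after rescaling by the slack at `o i`, to the complex of the slice with a rescaled
`ε`; that complex is constant for small `ε` (`exists_stable`), and since the slice has dimension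
`2e + 1`, `Cplx_card_le` bounds it by `O(n_i ^ e)`. This is `card_supporting_le`.

*Faces containing a whole slice.* A functional constant on a slice is a multiple of the inner product
with `u` (`functional_eq_of_const`), so there are at most `m + 1` such faces.
-/

open Set Pointwise RealInnerProductSpace

/-! ### Systems of linear inequalities and their complexes of tight sets -/

section Systems

variable {ι E : Type*} [Fintype ι] [AddCommGroup E] [Module ℝ E]

/-- The polyhedron of functionals `z` with `z (a i) ≤ r i` for all `i`. -/
def Feas (a : ι → E) (r : ι → ℝ) : Set (Module.Dual ℝ E) :=
  {z | ∀ i, z (a i) ≤ r i}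

open Classical in
/-- The set of inequalities that hold with equality at `z`. -/
noncomputable def tight (a : ι → E) (r : ι → ℝ) (z : Module.Dual ℝ E) : Finset ι :=
  Finset.univ.filter fun i => z (a i) = r i

open Classical in
/-- The sets of inequalities that are simultaneously tight at some feasible functional. -/
noncomputable def Cplx (a : ι → E) (r : ι → ℝ) : Finset (Finset ι) :=
  Finset.univ.filter fun S => ∃ z ∈ Feas a r, S ⊆ tight a r z

/-- The polyhedron `Feas a r` is simple: the vectors tight at any feasible functional are
linearly independent. -/
def Nondeg (a : ι → E) (r : ι → ℝ) : Prop :=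
  ∀ z ∈ Feas a r, LinearIndepOn ℝ a (tight a r z : Set ι)

lemma mem_tight {a : ι → E} {r : ι → ℝ} {z : Module.Dual ℝ E} {i : ι} :
    i ∈ tight a r z ↔ z (a i) = r i := by
  simp [tight]

lemma mem_Cplx {a : ι → E} {r : ι → ℝ} {S : Finset ι} :
    S ∈ Cplx a r ↔ ∃ z ∈ Feas a r, S ⊆ tight a r z := by
  simp [Cplx]

lemma Cplx_mono {a : ι → E} {r : ι → ℝ} {S S' : Finset ι} (h : S' ⊆ S) (hS : S ∈ Cplx a r) :
    S' ∈ Cplx a r := by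
  rw [mem_Cplx] at *
  obtain ⟨z, hz, hzS⟩ := hS
  exact ⟨z, hz, h.trans hzS⟩

/-- One step of the walk to a vertex: along a functional vanishing on the tight vectors, the first
inequality to become tight enlarges the tight set. -/
lemma push_step (a : ι → E) (r : ι → ℝ) {z : Module.Dual ℝ E} (hz : z ∈ Feas a r) {i : ι}
    (hi : a i ∉ Submodule.span ℝ (a '' (tight a r z : Set ι))) :
    ∃ z' ∈ Feas a r, tight a r z ⊂ tight a r z' := by
  classical
  obtain ⟨f, hf, hker⟩ := Submodule.exists_le_ker_of_notMem hi
  have hf0 : ∀ j ∈ tight a r z, f (a j) = 0 := fun j hj =>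
    hker (Submodule.subset_span (mem_image_of_mem a hj))
  -- replacing `f` by `-f` if necessary, the inequality `i` becomes violated far out
  obtain ⟨f, hf, hf0⟩ : ∃ f : Module.Dual ℝ E, 0 < f (a i) ∧ ∀ j ∈ tight a r z, f (a j) = 0 := by
    rcases lt_or_gt_of_ne hf with h | h
    · exact ⟨-f, by simpa using h, fun j hj => by simp [hf0 j hj]⟩
    · exact ⟨f, h, hf0⟩
  obtain ⟨j, hj, hmin⟩ := Finset.exists_min_image (Finset.univ.filter fun j => 0 < f (a j))
    (fun j => (r j - z (a j)) / f (a j)) ⟨i, by simpa using hf⟩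
  simp only [Finset.mem_filter, Finset.mem_univ, true_and] at hj hmin
  set t := (r j - z (a j)) / f (a j) with ht
  have ht0 : 0 ≤ t := div_nonneg (sub_nonneg.2 (hz j)) hj.le
  refine ⟨z + t • f, fun k => ?_, ?_⟩
  · rcases lt_or_ge 0 (f (a k)) with hk | hk
    · have := hmin k hk
      rw [le_div_iff₀ hk] at this
      simp only [LinearMap.add_apply, LinearMap.smul_apply, smul_eq_mul]
      linarith
    · have := mul_nonpos_of_nonneg_of_nonpos ht0 hk
      have := hz k
      simp only [LinearMap.add_apply, LinearMap.smul_apply, smul_eq_mul]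
      linarith
  · refine Finset.ssubset_iff_of_subset (fun k hk => ?_) |>.2 ⟨j, ?_, fun h => ?_⟩
    · rw [mem_tight]
      simp [hf0 k hk, mem_tight.1 hk]
    · rw [mem_tight]
      simp only [LinearMap.add_apply, LinearMap.smul_apply, smul_eq_mul, ht]
      field_simp
      ring
    · exact hj.ne' (hf0 j h)

/-- Every tight set extends to one whose vectors span all the `a i`. -/
lemma exists_spanning (a : ι → E) (r : ι → ℝ) {z : Module.Dual ℝ E} (hz : z ∈ Feas a r) :
    ∃ z' ∈ Feas a r, tight a r z ⊆ tight a r z' ∧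
      ∀ i, a i ∈ Submodule.span ℝ (a '' (tight a r z' : Set ι)) := by
  classical
  induction h : Fintype.card ι - (tight a r z).card using Nat.strong_induction_on generalizing z with
  | _ n ih =>
    by_cases hall : ∀ i, a i ∈ Submodule.span ℝ (a '' (tight a r z : Set ι))
    · exact ⟨z, hz, Finset.Subset.refl _, hall⟩
    · push Not at hall
      obtain ⟨i, hi⟩ := hall
      obtain ⟨z', hz', hlt⟩ := push_step a r hz hi
      have h1 := Finset.card_lt_card hlt
      have h2 := Finset.card_le_univ (tight a r z')
      obtain ⟨z'', hz'', hsub, hspan⟩ := ih _ (by omega) hz' rfl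
      exact ⟨z'', hz'', hlt.1.trans hsub, hspan⟩

/-- LP duality in its easy direction: if `c` is a combination of the vectors tight at `y`, then `y`
maximizes `c` over the feasible `z` that are tight wherever the coefficient is negative, and
every other maximizer is tight wherever `y` is. -/
lemma key_max {a : ι → E} {r : ι → ℝ} {y z : Module.Dual ℝ E}
    (hz : z ∈ Feas a r) {c : E} {l : ι → ℝ} (hc : ∑ b ∈ tight a r y, l b • a b = c)
    (hl : ∀ b ∈ tight a r y, l b ≠ 0) (hU : ∀ b ∈ tight a r y, l b < 0 → z (a b) = r b) :
    z c ≤ y c ∧ (z c = y c → tight a r y ⊆ tight a r z) := by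
  have hterm : ∀ b ∈ tight a r y, l b * (z (a b) - r b) ≤ 0 := by
    intro b hb
    rcases lt_or_gt_of_ne (hl b hb) with h | h
    · simp [hU b hb h]
    · exact mul_nonpos_of_nonneg_of_nonpos h.le (by linarith [hz b])
  have hdiff : z c - y c = ∑ b ∈ tight a r y, l b * (z (a b) - r b) := by
    rw [← hc, map_sum, map_sum, ← Finset.sum_sub_distrib]
    refine Finset.sum_congr rfl fun b hb => ?_
    rw [map_smul, map_smul, mem_tight.1 hb, smul_eq_mul, smul_eq_mul]
    ring
  refine ⟨by linarith [Finset.sum_nonpos hterm], fun h b hb => ?_⟩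
  have h0 : ∑ b ∈ tight a r y, l b * (z (a b) - r b) = 0 := by rw [← hdiff, h, sub_self]
  have := (Finset.sum_eq_zero_iff_of_nonpos hterm).1 h0 b hb
  rcases mul_eq_zero.1 this with h' | h'
  · exact absurd h' (hl b hb)
  · rw [mem_tight]; linarith

/-- A vertex is determined by the tight indices at which a generic `c` has negative coefficient. -/
lemma key_inj {a : ι → E} {r : ι → ℝ} {y z : Module.Dual ℝ E} (hy : y ∈ Feas a r)
    (hz : z ∈ Feas a r) {c : E} {l l' : ι → ℝ}
    (hc : ∑ b ∈ tight a r y, l b • a b = c) (hl : ∀ b ∈ tight a r y, l b ≠ 0)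
    (hc' : ∑ b ∈ tight a r z, l' b • a b = c) (hl' : ∀ b ∈ tight a r z, l' b ≠ 0)
    (hU : (tight a r y).filter (fun b => l b < 0) = (tight a r z).filter (fun b => l' b < 0)) :
    tight a r y = tight a r z := by
  have h1 := key_max hz hc hl (fun b hb h => by
    have : b ∈ (tight a r y).filter (fun b => l b < 0) := Finset.mem_filter.2 ⟨hb, h⟩
    rw [hU] at this
    exact mem_tight.1 (Finset.mem_filter.1 this).1)
  have h2 := key_max hy hc' hl' (fun b hb h => by
    have : b ∈ (tight a r z).filter (fun b => l' b < 0) := Finset.mem_filter.2 ⟨hb, h⟩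
    rw [← hU] at this
    exact mem_tight.1 (Finset.mem_filter.1 this).1)
  have he := le_antisymm h1.1 h2.1
  exact Finset.Subset.antisymm (h1.2 he) (h2.2 he.symm)

/-- Some `c` in the span of the `a i` has only nonzero coordinates in every basis taken from the
`a i`. -/
lemma exists_generic_vector (a : ι → E) :
    ∃ c ∈ Submodule.span ℝ (range a), ∀ S : Finset ι,
      S.card < Module.finrank ℝ (Submodule.span ℝ (range a)) →
      c ∉ Submodule.span ℝ (a '' (S : Set ι)) := by
  classical
  set W := Submodule.span ℝ (range a) with hW
  have : FiniteDimensional ℝ W := FiniteDimensional.span_of_finite ℝ (finite_range a)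
  let s : Finset (Subspace ℝ W) := ((Finset.univ : Finset (Finset ι)).filter fun S =>
    S.card < Module.finrank ℝ W).image
      fun S : Finset ι => (Submodule.span ℝ (a '' (S : Set ι))).comap W.subtype
  have hs : ⊤ ∉ s := by
    intro h
    simp only [s, Finset.mem_image, Finset.mem_filter, Finset.mem_univ, true_and] at h
    obtain ⟨S, hS, htop⟩ := h
    have hle : W ≤ Submodule.span ℝ (a '' (S : Set ι)) := by
      intro x hx
      have : (⟨x, hx⟩ : W) ∈ (Submodule.span ℝ (a '' (S : Set ι))).comap W.subtype := by
        rw [htop]; trivial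
      simpa using this
    have : FiniteDimensional ℝ (Submodule.span ℝ (a '' (S : Set ι))) :=
      FiniteDimensional.span_of_finite ℝ (S.finite_toSet.image a)
    have h1 := Submodule.finrank_mono hle
    have h2 : Module.finrank ℝ (Submodule.span ℝ (a '' (S : Set ι))) ≤ S.card := by
      have := finrank_span_finset_le_card (R := ℝ) (S.image a)
      rw [Set.finrank, Finset.coe_image] at this
      exact this.trans Finset.card_image_le
    omega
  have hne := Subspace.biUnion_ne_univ_of_top_notMem hs
  obtain ⟨c, hc⟩ := (ne_univ_iff_exists_notMem _).1 hne
  refine ⟨c, c.2, fun S hS hmem => hc ?_⟩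
  refine mem_biUnion (x := (Submodule.span ℝ (a '' (S : Set ι))).comap W.subtype) ?_ ?_
  · simp only [s, Finset.coe_image, mem_image]
    exact ⟨S, by simpa using hS, rfl⟩
  · simpa using hmem

/-- The asymptotic upper bound theorem for simple polyhedra: a vertex with basis `B` is the maximum
or the minimum of a generic vector `c` over the face on which half of `B` is tight, so the
complex is bounded by its members with at most half as many elements as the dimension. -/
lemma Cplx_card_le {a : ι → E} {r : ι → ℝ} (hnd : Nondeg a r) :
    (Cplx a r).card ≤ 2 ^ (Module.finrank ℝ (Submodule.span ℝ (range a)) + 1) *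
      ((Cplx a r).filter fun U =>
        U.card ≤ Module.finrank ℝ (Submodule.span ℝ (range a)) / 2).card := by
  classical
  set D := Module.finrank ℝ (Submodule.span ℝ (range a)) with hD
  obtain ⟨c, hcW, hc⟩ := exists_generic_vector a
  let BB : Finset (Finset ι) := Finset.univ.filter fun B => ∃ z ∈ Feas a r, B = tight a r z ∧
      ∀ i, a i ∈ Submodule.span ℝ (a '' (tight a r z : Set ι))
  have hBB : ∀ B ∈ BB, ∃ z ∈ Feas a r, B = tight a r z ∧
      ∀ i, a i ∈ Submodule.span ℝ (a '' (tight a r z : Set ι)) := fun B hB => by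
    simpa [BB] using hB
  have hcard : ∀ B ∈ BB, B.card = D := by
    intro B hB
    obtain ⟨z, hz, rfl, hspan⟩ := hBB B hB
    have hli := hnd z hz
    have h1 := finrank_span_eq_card hli
    have h2 : range (fun x : ((tight a r z : Finset ι) : Set ι) => a x) =
        a '' (tight a r z : Set ι) := by
      rw [image_eq_range]
    have h3 : Submodule.span ℝ (a '' (tight a r z : Set ι)) = Submodule.span ℝ (range a) := by
      apply le_antisymm
      · exact Submodule.span_mono (image_subset_range _ _)
      · rw [Submodule.span_le]
        rintro _ ⟨i, rfl⟩
        exact hspan i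
    rw [h2, h3] at h1
    rw [hD, h1]
    simp
  -- coordinates of `c` in the basis `B`
  have hcoef : ∀ B, ∃ l : ι → ℝ, B ∈ BB → ∑ b ∈ B, l b • a b = c ∧ ∀ b ∈ B, l b ≠ 0 := by
    intro B
    by_cases hB : B ∈ BB
    swap
    · exact ⟨0, fun h => absurd h hB⟩
    have hcB := hcard B hB
    obtain ⟨z, hz, hBz, hspan⟩ := hBB B hB
    have hmem : c ∈ Submodule.span ℝ (a '' (B : Set ι)) := by
      refine (Submodule.span_le.2 ?_) hcW
      rintro _ ⟨i, rfl⟩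
      rw [hBz]
      exact hspan i
    rw [Submodule.mem_span_image_finset_iff_exists_fun] at hmem
    obtain ⟨l, hl⟩ := hmem
    refine ⟨fun i => if h : i ∈ B then l ⟨i, h⟩ else 0, fun _ => ?_⟩
    have hsum : ∑ b ∈ B, (if h : b ∈ B then l ⟨b, h⟩ else 0) • a b = c := by
      rw [← hl, ← Finset.sum_coe_sort B]
      refine Finset.sum_congr rfl fun b _ => ?_
      simp
    refine ⟨hsum, fun b hb h0 => ?_⟩
    refine hc (B.erase b) ?_ ?_
    · rw [Finset.card_erase_of_mem hb, hcB]
      have : 0 < B.card := Finset.card_pos.2 ⟨b, hb⟩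
      omega
    · rw [← hsum, ← Finset.add_sum_erase B _ hb, show (if h : b ∈ B then l ⟨b, h⟩ else 0) = 0 from h0,
        zero_smul, zero_add]
      refine Submodule.sum_mem _ fun x hx => Submodule.smul_mem _ _ ?_
      exact Submodule.subset_span (mem_image_of_mem a (by exact_mod_cast hx))
  choose l hl using hcoef
  let Φ : Finset ι → Bool × Finset ι := fun B =>
    if (B.filter fun b => l B b < 0).card ≤ D / 2 then (true, B.filter fun b => l B b < 0)
    else (false, B.filter fun b => -l B b < 0)
  have hΦmem : ∀ B ∈ BB, Φ B ∈ (Finset.univ : Finset Bool) ×ˢ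
      ((Cplx a r).filter fun U => U.card ≤ D / 2) := by
    intro B hB
    have hcB := hcard B hB
    obtain ⟨z, hz, hBz, -⟩ := hBB B hB
    have hsub : B ∈ Cplx a r := mem_Cplx.2 ⟨z, hz, hBz.subset⟩
    simp only [Finset.mem_product, Finset.mem_univ, true_and, Finset.mem_filter, Φ]
    split_ifs with h
    · exact ⟨Cplx_mono (Finset.filter_subset _ _) hsub, h⟩
    · refine ⟨Cplx_mono (Finset.filter_subset _ _) hsub, ?_⟩
      have hdisj : (B.filter fun b => l B b < 0).card + (B.filter fun b => -l B b < 0).card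
          ≤ B.card := by
        rw [← Finset.card_union_of_disjoint]
        · exact Finset.card_le_card
            (Finset.union_subset (Finset.filter_subset _ _) (Finset.filter_subset _ _))
        · rw [Finset.disjoint_filter]
          intro x _ h1 h2
          linarith
      simp only
      omega
  have hΦinj : Set.InjOn Φ (BB : Set (Finset ι)) := by
    intro B hB B' hB' heq
    obtain ⟨z, hz, hBz, -⟩ := hBB B hB
    obtain ⟨z', hz', hBz', -⟩ := hBB B' hB'
    obtain ⟨hs, hn⟩ := hl B hB
    obtain ⟨hs', hn'⟩ := hl B' hB'
    simp only [Φ] at heq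
    split_ifs at heq with h1 h2 h2
    · have hU := (Prod.ext_iff.1 heq).2
      simp only at hU
      generalize l B = lB at *
      generalize l B' = lB' at *
      subst hBz hBz'
      exact key_inj hz hz' hs hn hs' hn' hU
    · simp at heq
    · simp at heq
    · have hU := (Prod.ext_iff.1 heq).2
      simp only at hU
      generalize l B = lB at *
      generalize l B' = lB' at *
      subst hBz hBz'
      refine key_inj (c := -c) (l := fun b => -lB b) (l' := fun b => -lB' b) hz hz' ?_ ?_ ?_ ?_ hU
      · simp [neg_smul, Finset.sum_neg_distrib, hs]
      · intro b hb; simpa using hn b hb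
      · simp [neg_smul, Finset.sum_neg_distrib, hs']
      · intro b hb; simpa using hn' b hb
  have hBBcard := Finset.card_le_card_of_injOn Φ hΦmem hΦinj
  rw [Finset.card_product, Finset.card_univ, Fintype.card_bool] at hBBcard
  have hcover : Cplx a r ⊆ BB.biUnion fun B => B.powerset := by
    intro S hS
    obtain ⟨z, hz, hSz⟩ := mem_Cplx.1 hS
    obtain ⟨z', hz', hsub, hspan⟩ := exists_spanning a r hz
    refine Finset.mem_biUnion.2 ⟨tight a r z', ?_, Finset.mem_powerset.2 (hSz.trans hsub)⟩
    simp only [BB, Finset.mem_filter, Finset.mem_univ, true_and]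
    exact ⟨z', hz', rfl, hspan⟩
  calc (Cplx a r).card ≤ (BB.biUnion fun B => B.powerset).card := Finset.card_le_card hcover
    _ ≤ BB.card * 2 ^ D := Finset.card_biUnion_le_card_mul _ _ _ fun B hB => by
        rw [Finset.card_powerset, hcard B hB]
    _ ≤ (2 * ((Cplx a r).filter fun U => U.card ≤ D / 2).card) * 2 ^ D :=
        Nat.mul_le_mul_right _ hBBcard
    _ = _ := by rw [pow_succ]; ring

/-! ### Generic perturbations of the right-hand sides -/

/-- The direction `g` resolves all degeneracies of `a`: every dependent subfamily carries a linear
relation that `g` violates. -/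
def Generic (a : ι → E) (g : ι → ℝ) : Prop :=
  ∀ T : Finset ι, ¬ LinearIndepOn ℝ a (T : Set ι) →
    ∃ α : ι → ℝ, ∑ i ∈ T, α i • a i = 0 ∧ ∑ i ∈ T, α i * g i ≠ 0

lemma exists_generic {κ : Type*} [Finite κ] (A : κ → ι → E) : ∃ g : ι → ℝ, ∀ k, Generic (A k) g := by
  classical
  let I := {p : κ × Finset ι // ¬ LinearIndepOn ℝ (A p.1) (p.2 : Set ι)}
  have hI : ∀ p : I, ∃ f : ι → ℝ, ∑ i ∈ p.1.2, f i • A p.1.1 i = 0 ∧ ∃ i ∈ p.1.2, f i ≠ 0 :=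
    fun p => not_linearIndepOn_finset_iff.1 p.2
  choose f hf hf' using hI
  let v : I → (ι → ℝ) := fun p i => if i ∈ p.1.2 then f p i else 0
  have hv : ∀ p, v p ≠ 0 := by
    intro p h
    obtain ⟨i, hi, hne⟩ := hf' p
    have := congrFun h i
    simp [v, hi] at this
    exact hne this
  obtain ⟨φ, hφ⟩ := Module.exists_dual_forall_apply_ne_zero (K := ℝ) v hv
  refine ⟨fun i => φ (Pi.single i 1), fun k T hT => ⟨f ⟨(k, T), hT⟩, hf ⟨(k, T), hT⟩, ?_⟩⟩
  have h1 := hφ ⟨(k, T), hT⟩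
  rw [LinearMap.pi_apply_eq_sum_univ φ] at h1
  convert h1 using 1
  simp only [v, smul_eq_mul, ite_mul, zero_mul, Finset.sum_ite_mem, Finset.univ_inter]
  refine Finset.sum_congr rfl fun i _ => ?_
  congr 2
  ext j
  simp [Pi.single_apply, eq_comm]

lemma Generic.comp {κ ι' : Type*} {a : ι' → E} {g : ι' → ℝ} (h : Generic a g) (ψ : κ ↪ ι') :
    Generic (a ∘ ψ) (g ∘ ψ) := by
  classical
  intro T hT
  have : ¬ LinearIndepOn ℝ a ((T.map ψ : Finset ι') : Set ι') := by
    intro h'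
    apply hT
    rw [Finset.coe_map] at h'
    exact h'.comp_of_image ψ.injective.injOn
  obtain ⟨α, h1, h2⟩ := h _ this
  rw [Finset.sum_map] at h1 h2
  exact ⟨α ∘ ψ, h1, h2⟩

open Filter Topology in
lemma Generic.eventually_nondeg {a : ι → E} {g : ι → ℝ} (h : Generic a g) (r : ι → ℝ) :
    ∀ᶠ ε : ℝ in 𝓝[>] 0, Nondeg a (fun i => r i + ε * g i) := by
  classical
  have hT : ∀ T : Finset ι, ∀ᶠ ε : ℝ in 𝓝[>] 0, ¬ LinearIndepOn ℝ a (T : Set ι) →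
      ∀ z : Module.Dual ℝ E, ∃ i ∈ T, z (a i) ≠ r i + ε * g i := by
    intro T
    by_cases hli : LinearIndepOn ℝ a (T : Set ι)
    · simp [hli]
    obtain ⟨α, h1, h2⟩ := h T hli
    have hne : ∀ᶠ ε : ℝ in 𝓝[>] 0, ε ≠ -(∑ i ∈ T, α i * r i) / (∑ i ∈ T, α i * g i) := by
      by_cases h0 : -(∑ i ∈ T, α i * r i) / (∑ i ∈ T, α i * g i) = 0
      · rw [h0]
        filter_upwards [self_mem_nhdsWithin] with ε hε using (ne_of_gt hε)
      · exact nhdsWithin_le_nhds (isOpen_ne.mem_nhds (Ne.symm h0))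
    filter_upwards [hne] with ε hε _ z
    by_contra! hcon
    have hz := congrArg z h1
    rw [map_sum, map_zero] at hz
    simp only [map_smul, smul_eq_mul] at hz
    have : ∑ i ∈ T, α i * z (a i) = ∑ i ∈ T, α i * r i + ε * ∑ i ∈ T, α i * g i := by
      rw [Finset.mul_sum, ← Finset.sum_add_distrib]
      refine Finset.sum_congr rfl fun i hi => ?_
      rw [hcon i hi]; ring
    apply hε
    rw [eq_div_iff h2]
    linarith
  filter_upwards [eventually_all.2 hT] with ε hε z _
  by_contra hdep
  obtain ⟨i, hi, hne⟩ := hε _ hdep z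
  exact hne (mem_tight.1 hi)

open Filter Topology in
/-- A tight set `T` of the unperturbed system contains a member of the perturbed complex with the
same span, for every small perturbation. -/
lemma exists_perturbed_face (a : ι → E) {r : ι → ℝ} (hr : ∀ i, 0 < r i) (g : ι → ℝ)
    {z : Module.Dual ℝ E} (hz : z ∈ Feas a r) :
    ∃ S ⊆ tight a r z, (∀ i ∈ tight a r z, a i ∈ Submodule.span ℝ (a '' (S : Set ι))) ∧
      ∀ᶠ ε : ℝ in 𝓝[>] 0, S ∈ Cplx a (fun i => r i + ε * g i) := by
  classical
  set T := tight a r z with hT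
  -- the first-order system on `T`; a large negative multiple of `z` is feasible for it
  let a' : T → E := fun i => a i
  let g' : T → ℝ := fun i => g i
  obtain ⟨M, hM⟩ : ∃ M : ℝ, ∀ i, -(M * r i) ≤ g i := by
    obtain ⟨M, hM⟩ := (finite_range fun i => -g i / r i).bddAbove
    refine ⟨M, fun i => ?_⟩
    have := hM (mem_range_self i)
    rw [div_le_iff₀ (hr i)] at this
    linarith
  have hw0 : (-M) • z ∈ Feas a' g' := by
    intro i
    have : z (a i) = r i := mem_tight.1 i.2
    simp only [LinearMap.smul_apply, smul_eq_mul, a', g', this]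
    linarith [hM i]
  obtain ⟨w, hw, -, hspan⟩ := exists_spanning a' g' hw0
  refine ⟨(tight a' g' w).map (Function.Embedding.subtype _), ?_, ?_, ?_⟩
  · intro i hi
    simp only [Finset.mem_map, Function.Embedding.subtype_apply] at hi
    obtain ⟨j, -, rfl⟩ := hi
    exact j.2
  · intro i hi
    have := hspan ⟨i, hi⟩
    rw [Finset.coe_map, image_image]
    exact this
  · have hout : ∀ i, ∀ᶠ ε : ℝ in 𝓝[>] 0, i ∉ T → z (a i) + ε * w (a i) ≤ r i + ε * g i := by
      intro i
      by_cases hi : i ∈ T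
      · simp [hi]
      have hlt : z (a i) < r i := lt_of_le_of_ne (hz i) (fun h => hi (mem_tight.2 h))
      have hc : ContinuousAt (fun ε : ℝ => r i + ε * g i - (z (a i) + ε * w (a i))) 0 := by
        fun_prop
      have : ∀ᶠ ε : ℝ in 𝓝 0, 0 < r i + ε * g i - (z (a i) + ε * w (a i)) :=
        hc.eventually (lt_mem_nhds (by simpa using hlt))
      filter_upwards [nhdsWithin_le_nhds this] with ε hε _
      linarith
    filter_upwards [eventually_all.2 hout, self_mem_nhdsWithin] with ε hε hpos
    have hpos : 0 < ε := hpos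
    refine mem_Cplx.2 ⟨z + ε • w, fun i => ?_, fun i hi => ?_⟩
    · simp only [LinearMap.add_apply, LinearMap.smul_apply, smul_eq_mul]
      by_cases hi : i ∈ T
      · have h1 : w (a i) ≤ g i := hw ⟨i, hi⟩
        have h2 := mul_le_mul_of_nonneg_left h1 hpos.le
        linarith [hz i]
      · exact hε i hi
    · simp only [Finset.mem_map, Function.Embedding.subtype_apply] at hi
      obtain ⟨j, hj, rfl⟩ := hi
      have h1 : w (a j) = g j := mem_tight (a := a') (r := g') |>.1 hj
      have h2 : z (a j) = r j := mem_tight.1 j.2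
      rw [mem_tight]
      simp [h1, h2]

/-- A tight set is determined by any of its spanning subfamilies. -/
lemma tight_subset_of_span {a : ι → E} {r : ι → ℝ} {z z' : Module.Dual ℝ E} {S : Finset ι}
    (hS : S ⊆ tight a r z) (hS' : S ⊆ tight a r z')
    (h : ∀ i ∈ tight a r z, a i ∈ Submodule.span ℝ (a '' (S : Set ι))) :
    tight a r z ⊆ tight a r z' := by
  intro i hi
  have hle : Submodule.span ℝ (a '' (S : Set ι)) ≤ LinearMap.ker (z' - z) := by
    rw [Submodule.span_le]
    rintro _ ⟨j, hj, rfl⟩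
    simp [mem_tight.1 (hS hj), mem_tight.1 (hS' hj)]
  have := hle (h i hi)
  simp only [LinearMap.mem_ker, LinearMap.sub_apply] at this
  rw [mem_tight, ← mem_tight.1 hi]
  linarith

/-- The parameters `ε` at which `S` is a member of the perturbed complex form a convex set, so the
complex does not change any more below some positive threshold. -/
lemma exists_stable (a : ι → E) (r g : ι → ℝ) :
    ∃ δ : ℝ, 0 < δ ∧ ∀ ε ε' : ℝ, 0 < ε → ε < δ → 0 < ε' → ε' < δ →
      Cplx a (fun i => r i + ε * g i) ⊆ Cplx a (fun i => r i + ε' * g i) := by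
  classical
  have hconv : ∀ S : Finset ι, ∀ x y t : ℝ, x < t → t < y →
      S ∈ Cplx a (fun i => r i + x * g i) → S ∈ Cplx a (fun i => r i + y * g i) →
      S ∈ Cplx a (fun i => r i + t * g i) := by
    intro S x y t hxt hty hx hy
    obtain ⟨p, hp, hSp⟩ := mem_Cplx.1 hx
    obtain ⟨q, hq, hSq⟩ := mem_Cplx.1 hy
    have hxy : 0 < y - x := by linarith
    have hα : 0 ≤ (y - t) / (y - x) := div_nonneg (by linarith) hxy.le
    have hβ : 0 ≤ (t - x) / (y - x) := div_nonneg (by linarith) hxy.le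
    have hrhs : ∀ i, (y - t) / (y - x) * (r i + x * g i) + (t - x) / (y - x) * (r i + y * g i)
        = r i + t * g i := by
      intro i
      field_simp
      ring
    refine mem_Cplx.2 ⟨((y - t) / (y - x)) • p + ((t - x) / (y - x)) • q, fun i => ?_,
      fun i hi => ?_⟩
    · refine le_of_le_of_eq ?_ (hrhs i)
      exact add_le_add (mul_le_mul_of_nonneg_left (hp i) hα) (mul_le_mul_of_nonneg_left (hq i) hβ)
    · rw [mem_tight, ← hrhs i, ← mem_tight.1 (hSp hi), ← mem_tight.1 (hSq hi)]
      simp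
  have hS : ∀ S : Finset ι, ∃ δ : ℝ, 0 < δ ∧ ∀ ε ε' : ℝ, 0 < ε → ε < δ → 0 < ε' → ε' < δ →
      S ∈ Cplx a (fun i => r i + ε * g i) → S ∈ Cplx a (fun i => r i + ε' * g i) := by
    intro S
    by_cases h : ∃ δ : ℝ, 0 < δ ∧ ∀ ε, 0 < ε → ε < δ → S ∉ Cplx a (fun i => r i + ε * g i)
    · obtain ⟨δ, hδ, h⟩ := h
      exact ⟨δ, hδ, fun ε ε' h1 h2 _ _ h3 => absurd h3 (h ε h1 h2)⟩
    · push Not at h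
      obtain ⟨δ, hδ, -, hmem⟩ := h 1 one_pos
      refine ⟨δ, hδ, fun ε ε' _ _ h1 h2 _ => ?_⟩
      obtain ⟨x, -, hx, hxmem⟩ := h ε' h1
      exact hconv S x δ ε' hx h2 hxmem hmem
  choose δ hδ hmain using hS
  obtain ⟨S₀, -, hmin⟩ := Finset.exists_min_image (Finset.univ : Finset (Finset ι)) δ
    ⟨∅, Finset.mem_univ _⟩
  refine ⟨δ S₀, hδ S₀, fun ε ε' h1 h2 h3 h4 S hSmem => ?_⟩
  have := hmin S (Finset.mem_univ _)
  exact hmain S ε ε' h1 (h2.trans_le this) h3 (h4.trans_le this) hSmem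

end Systems

/-! ### Counting small subsets -/

section Counting

lemma exists_image_eq {α : Type*} [DecidableEq α] {e : ℕ} {U : Finset α} (hU : U.Nonempty)
    (hcard : U.card ≤ e) : ∃ f : Fin e → α, Finset.univ.image f = U := by
  have : Nonempty U := hU.to_subtype
  obtain ⟨φ⟩ : Nonempty (U ↪ Fin e) := Function.Embedding.nonempty_of_card_le (by simpa using hcard)
  refine ⟨fun k => (Function.invFun φ k : U), ?_⟩
  ext x
  simp only [Finset.mem_image, Finset.mem_univ, true_and]
  constructor
  · rintro ⟨k, rfl⟩
    exact Subtype.prop _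
  · intro hx
    exact ⟨φ ⟨x, hx⟩, by rw [Function.leftInverse_invFun φ.injective]⟩

lemma card_small_subsets {α : Type*} [Fintype α] [Nonempty α] [DecidableEq α] (e : ℕ) :
    ((Finset.univ : Finset (Finset α)).filter fun U => U.card ≤ e).card ≤
      2 * Fintype.card α ^ e := by
  have hsub : ((Finset.univ : Finset (Finset α)).filter fun U => U.card ≤ e) ⊆
      insert ∅ ((Finset.univ : Finset (Fin e → α)).image fun f => Finset.univ.image f) := by
    intro U hU
    rw [Finset.mem_filter] at hU
    rcases U.eq_empty_or_nonempty with rfl | hne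
    · exact Finset.mem_insert_self _ _
    · obtain ⟨f, hf⟩ := exists_image_eq hne hU.2
      exact Finset.mem_insert_of_mem (Finset.mem_image.2 ⟨f, Finset.mem_univ _, hf⟩)
  have h1 := Finset.card_le_card hsub
  have h2 := Finset.card_insert_le (∅ : Finset α)
    ((Finset.univ : Finset (Fin e → α)).image fun f => Finset.univ.image f)
  have h3 : ((Finset.univ : Finset (Fin e → α)).image fun f => Finset.univ.image f).card ≤
      Fintype.card α ^ e := by
    refine Finset.card_image_le.trans ?_
    simp
  have h4 : 1 ≤ Fintype.card α ^ e := Nat.one_le_pow _ _ Fintype.card_pos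
  omega

/-- The sum `∑_{i ≠ j} n i * (n j) ^ e`. -/
def crossSum {m : ℕ} (n : Fin m → ℕ) (e : ℕ) : ℕ :=
  ∑ i, ∑ j, if i ≠ j then n i * n j ^ e else 0

lemma le_crossSum {m : ℕ} (n : Fin m → ℕ) (e : ℕ) {i j : Fin m} (h : i ≠ j) :
    n i * n j ^ e ≤ crossSum n e := by
  have h1 : n i * n j ^ e ≤ ∑ j, if i ≠ j then n i * n j ^ e else 0 := by
    have := Finset.single_le_sum (f := fun j => if i ≠ j then n i * n j ^ e else 0)
      (fun _ _ => Nat.zero_le _) (Finset.mem_univ j)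
    simpa [h] using this
  exact h1.trans (Finset.single_le_sum
    (f := fun i => ∑ j, if i ≠ j then n i * n j ^ e else 0)
    (fun _ _ => Nat.zero_le _) (Finset.mem_univ i))

lemma pow_le_crossSum {m : ℕ} (hm : 2 ≤ m) {n : Fin m → ℕ} (hn : ∀ i, 1 ≤ n i) (e : ℕ) (j : Fin m) :
    n j ^ e ≤ crossSum n e := by
  have : Nontrivial (Fin m) := Fin.nontrivial_iff_two_le.2 hm
  obtain ⟨i, hi⟩ := exists_ne j
  exact (Nat.le_mul_of_pos_left _ (hn i)).trans (le_crossSum n e hi)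

lemma prod_le_crossSum {m : ℕ} (n : Fin m → ℕ) (e : ℕ) (φ : Fin (e + 1) → Fin m)
    (hφ : ∀ i, ∃ k, φ k ≠ i) : ∏ k, n (φ k) ≤ crossSum n e := by
  obtain ⟨k₀, -, hmax⟩ := Finset.exists_max_image (Finset.univ : Finset (Fin (e + 1)))
    (fun k => n (φ k)) ⟨0, Finset.mem_univ _⟩
  obtain ⟨k₁, hk₁⟩ := hφ (φ k₀)
  refine le_trans ?_ (le_crossSum n e hk₁)
  rw [← Finset.mul_prod_erase _ _ (Finset.mem_univ k₁)]
  refine Nat.mul_le_mul_left _ ?_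
  refine (Finset.prod_le_pow_card _ _ (n (φ k₀)) fun k _ => hmax k (Finset.mem_univ _)).trans ?_
  rw [Finset.card_erase_of_mem (Finset.mem_univ _)]
  simp

/-- Small sets that meet two colour classes are few. -/
lemma card_mixed {α : Type*} [Fintype α] [DecidableEq α] {m : ℕ} (col : α → Fin m)
    (n : Fin m → ℕ) (e : ℕ)
    (hn : ∀ i, ((Finset.univ : Finset α).filter fun x => col x = i).card ≤ 2 * n i)
    (hm : 0 < m) :
    ((Finset.univ : Finset (Finset α)).filter fun U =>
      U.card ≤ e + 1 ∧ ∀ i, ∃ x ∈ U, col x ≠ i).card ≤ (2 * m) ^ (e + 1) * crossSum n e := by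
  let Φ : Finset (Fin (e + 1) → Fin m) := Finset.univ.filter fun φ => ∀ i, ∃ k, φ k ≠ i
  have hsub : ((Finset.univ : Finset (Finset α)).filter fun U =>
      U.card ≤ e + 1 ∧ ∀ i, ∃ x ∈ U, col x ≠ i) ⊆
      Φ.biUnion fun φ => (Fintype.piFinset fun k => Finset.univ.filter fun x => col x = φ k).image
        fun f => Finset.univ.image f := by
    intro U hU
    simp only [Finset.mem_filter, Finset.mem_univ, true_and] at hU
    obtain ⟨hc, hU⟩ := hU
    obtain ⟨x₀, hx₀, -⟩ := hU ⟨0, hm⟩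
    obtain ⟨f, rfl⟩ := exists_image_eq ⟨x₀, hx₀⟩ hc
    refine Finset.mem_biUnion.2 ⟨col ∘ f, ?_, Finset.mem_image.2 ⟨f, ?_, rfl⟩⟩
    · simp only [Φ, Finset.mem_filter, Finset.mem_univ, true_and]
      intro i
      obtain ⟨x, hx, hne⟩ := hU i
      obtain ⟨k, -, rfl⟩ := Finset.mem_image.1 hx
      exact ⟨k, hne⟩
    · simp [Fintype.mem_piFinset]
  calc _ ≤ _ := Finset.card_le_card hsub
    _ ≤ Φ.card * (2 ^ (e + 1) * crossSum n e) := by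
        refine Finset.card_biUnion_le_card_mul _ _ _ fun φ hφ => ?_
        refine Finset.card_image_le.trans ?_
        rw [Fintype.card_piFinset]
        calc _ ≤ ∏ k, 2 * n (φ k) := Finset.prod_le_prod' fun k _ => hn (φ k)
          _ = 2 ^ (e + 1) * ∏ k, n (φ k) := by
              rw [Finset.prod_mul_distrib]; simp
          _ ≤ _ := Nat.mul_le_mul_left _ (prod_le_crossSum n e φ (by simpa [Φ] using hφ))
    _ ≤ m ^ (e + 1) * (2 ^ (e + 1) * crossSum n e) := by
        refine Nat.mul_le_mul_right _ ?_
        refine (Finset.card_le_univ _).trans ?_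
        simp
    _ = _ := by rw [mul_pow]; ring

end Counting

/-! ### Supporting functionals of a union of slices -/

/-- The bound for the number of normalized supporting functionals, counted by the sets of vertices
at which they attain the value `1`. The functionals are normalized with respect to `o₀`, and `o i`
plays the role of an interior point of slice `i`: no functional attains `1` there. -/
lemma card_supporting_le {E : Type*} [AddCommGroup E] [Module ℝ E] [FiniteDimensional ℝ E]
    {m e : ℕ} (hm : 2 ≤ m) (hE : Module.finrank ℝ E ≤ 2 * e + 2)
    (V : Fin m → Finset E) (hV : ∀ i, (V i).Nonempty) (o : Fin m → E) (o₀ : E)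
    (hdim : ∀ i, Module.finrank ℝ (Submodule.span ℝ (range fun v : V i => (v : E) - o i)) ≤
      2 * e + 1)
    {κ : Type*} [Fintype κ] (z : κ → Module.Dual ℝ E)
    (hz : ∀ k i, ∀ v ∈ V i, z k (v - o₀) ≤ 1) (hzo : ∀ k i, z k (o i - o₀) < 1)
    (hinj : ∀ k k', (∀ i, ∀ v ∈ V i, z k (v - o₀) = 1 ↔ z k' (v - o₀) = 1) → k = k') :
    Fintype.card κ ≤ 2 ^ (2 * e + 3) * ((2 * m) ^ (e + 1) + m * 2 ^ (2 * e + 4)) *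
      crossSum (fun i => (V i).card) e := by
  classical
  let n : Fin m → ℕ := fun i => (V i).card
  have hn : ∀ i, 1 ≤ n i := fun i => Finset.card_pos.2 (hV i)
  let ι := (Σ i, V i) ⊕ Fin m
  let pt : ι → E := Sum.elim (fun x => (x.2 : E)) o
  let col : ι → Fin m := Sum.elim (fun x => x.1) id
  let ctr : Option (Fin m) → E := fun k => k.elim o₀ o
  let A : Option (Fin m) → ι → E := fun k x => pt x - ctr k
  let a : ι → E := A none
  obtain ⟨g, hg⟩ := exists_generic A
  -- a uniform lower bound for the slacks of the points `o i`
  obtain ⟨s, hs0, hs1, hs⟩ : ∃ s : ℝ, 0 < s ∧ s < 1 ∧ ∀ k i, s < 1 - z k (o i - o₀) := by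
    have h1 : ∀ᶠ s : ℝ in nhdsWithin 0 (Ioi 0), ∀ k i, s < 1 - z k (o i - o₀) := by
      rw [Filter.eventually_all]
      intro k
      rw [Filter.eventually_all]
      intro i
      exact nhdsWithin_le_nhds (gt_mem_nhds (by linarith [hzo k i]))
    have h2 : ∀ᶠ s : ℝ in nhdsWithin 0 (Ioi 0), s < 1 :=
      nhdsWithin_le_nhds (gt_mem_nhds one_pos)
    obtain ⟨s, ⟨h1, h2⟩, h3⟩ := ((h1.and h2).and self_mem_nhdsWithin).exists
    exact ⟨s, h3, h2, h1⟩
  let r : ι → ℝ := Sum.elim (fun _ => 1) (fun _ => 1 - s)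
  have hr : ∀ x, 0 < r x := by
    rintro (x | i)
    · exact one_pos
    · exact sub_pos.2 hs1
  have hzF : ∀ k, z k ∈ Feas a r := by
    rintro k (x | i)
    · exact hz k x.1 x.2 x.2.2
    · have := hs k i
      change z k (o i - o₀) ≤ 1 - s
      linarith
  choose S hS hSspan hSev using fun k => exists_perturbed_face a hr g (hzF k)
  -- the systems of the single slices, centred at `o i`
  let ψ : (i : Fin m) → V i ↪ ι := fun i =>
    ⟨fun v => Sum.inl ⟨i, v⟩, fun v w h => by
      have h' := Sum.inl.inj h
      simpa using h'⟩
  let b : (i : Fin m) → V i → E := fun i => A (some i) ∘ ψ i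
  have hslice : ∀ i, ∃ (δ : ℝ) (Δ : Finset (Finset (V i))), 0 < δ ∧
      (∀ ε, 0 < ε → ε < δ → Cplx (b i) (fun v => 1 + ε * g (ψ i v)) ⊆ Δ) ∧
      Δ.card ≤ 2 ^ (2 * e + 3) * n i ^ e := by
    intro i
    obtain ⟨δ, hδ, hst⟩ := exists_stable (b i) (fun _ => 1) (g ∘ ψ i)
    have hnd := ((hg (some i)).comp (ψ i)).eventually_nondeg (fun _ => 1)
    have h2 : ∀ᶠ ε : ℝ in nhdsWithin 0 (Ioi 0), ε < δ := nhdsWithin_le_nhds (gt_mem_nhds hδ)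
    obtain ⟨ε₀, ⟨h3, h4⟩, h5⟩ := ((hnd.and h2).and self_mem_nhdsWithin).exists
    refine ⟨δ, _, hδ, fun ε h h' => hst ε ε₀ h h' h5 h4, ?_⟩
    refine (Cplx_card_le h3).trans ?_
    have hD : Module.finrank ℝ (Submodule.span ℝ (range (A (some i) ∘ ψ i))) ≤ 2 * e + 1 := hdim i
    have : Nonempty (V i) := (hV i).to_subtype
    have hc := card_small_subsets (α := V i) e
    rw [Fintype.card_coe] at hc
    calc _ ≤ 2 ^ (2 * e + 1 + 1) * (2 * n i ^ e) := by
          refine Nat.mul_le_mul (Nat.pow_le_pow_right two_pos (by omega)) (le_trans ?_ hc)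
          refine Finset.card_le_card fun U hU => ?_
          simp only [Finset.mem_filter, Finset.mem_univ, true_and] at hU ⊢
          omega
      _ = _ := by ring
  choose δ Δ hδ hΔ hΔcard using hslice
  -- a parameter small enough for all purposes
  obtain ⟨ε, hε, hnd, hSε, hεs, hεδ⟩ : ∃ ε : ℝ, 0 < ε ∧ Nondeg a (fun x => r x + ε * g x) ∧
      (∀ k, S k ∈ Cplx a (fun x => r x + ε * g x)) ∧ (∀ i, ε * g (Sum.inr i) < s / 2) ∧
      ∀ i, ε < δ i * (s / 2) := by
    have h1 := (hg none).eventually_nondeg r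
    have h2 := Filter.eventually_all.2 hSev
    have h3 : ∀ᶠ ε : ℝ in nhdsWithin 0 (Ioi 0), ∀ i, ε * g (Sum.inr i) < s / 2 := by
      rw [Filter.eventually_all]
      intro i
      have hc : ContinuousAt (fun ε : ℝ => ε * g (Sum.inr i)) 0 := by fun_prop
      exact nhdsWithin_le_nhds (hc.eventually (gt_mem_nhds (by simpa using hs0)))
    have h4 : ∀ᶠ ε : ℝ in nhdsWithin 0 (Ioi 0), ∀ i, ε < δ i * (s / 2) := by
      rw [Filter.eventually_all]
      intro i
      have := hδ i
      exact nhdsWithin_le_nhds (gt_mem_nhds (by positivity))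
    obtain ⟨ε, ⟨⟨⟨h1, h2⟩, h3⟩, h4⟩, h5⟩ :=
      ((((h1.and h2).and h3).and h4).and self_mem_nhdsWithin).exists
    exact ⟨ε, h5, h1, h2, h3, h4⟩
  set C := Cplx a (fun x => r x + ε * g x) with hC
  -- distinct functionals give distinct members of the perturbed complex
  have hκ : Fintype.card κ ≤ C.card := by
    rw [← Finset.card_univ]
    refine Finset.card_le_card_of_injOn S (fun k _ => hSε k) fun k _ k' _ hkk => hinj k k' ?_
    have ht : tight a r (z k) = tight a r (z k') := by
      apply Finset.Subset.antisymm
      · exact tight_subset_of_span (hS k) (hkk ▸ hS k') (hSspan k)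
      · exact tight_subset_of_span (hS k') (hkk ▸ hS k) (hSspan k')
    intro i v hv
    have h1 := mem_tight (a := a) (r := r) (z := z k) (i := Sum.inl ⟨i, v, hv⟩)
    have h2 := mem_tight (a := a) (r := r) (z := z k') (i := Sum.inl ⟨i, v, hv⟩)
    rw [ht] at h1
    exact h1.symm.trans h2
  -- members of the complex inside one slice belong to the perturbed complex of the slice:
  -- dividing by the slack `q` at `o i` recentres the system at `o i` and turns `ε` into `ε / q`
  have hmono : ∀ i, ∀ U ∈ C, (Finset.univ.filter fun v => ψ i v ∈ U) ∈ Δ i := by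
    intro i U hU
    obtain ⟨y, hy, hUy⟩ := mem_Cplx.1 hU
    set q := 1 - y (o i - o₀) with hq
    have hqs : s / 2 < q := by
      have h1 : y (o i - o₀) ≤ 1 - s + ε * g (Sum.inr i) := hy (Sum.inr i)
      linarith [hεs i]
    have hq0 : 0 < q := by linarith
    have hval : ∀ v : V i, q⁻¹ * y (b i v) = 1 + q⁻¹ * (y (a (ψ i v)) - 1) := by
      intro v
      have h1 : b i v = a (ψ i v) - (o i - o₀) := by
        simp only [b, A, a, ctr, Function.comp, Option.elim]
        abel
      rw [h1, map_sub, show y (o i - o₀) = 1 - q by rw [hq]; ring]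
      field_simp
      ring
    refine hΔ i (ε / q) (div_pos hε hq0) ?_ ?_
    · rw [div_lt_iff₀ hq0]
      exact (hεδ i).trans (mul_lt_mul_of_pos_left hqs (hδ i))
    · refine mem_Cplx.2 ⟨q⁻¹ • y, fun v => ?_, fun v hv => ?_⟩
      · change q⁻¹ * y (b i v) ≤ 1 + ε / q * g (ψ i v)
        have h1 : y (a (ψ i v)) ≤ 1 + ε * g (ψ i v) := hy (ψ i v)
        rw [hval, div_mul_eq_mul_div, div_eq_inv_mul]
        have := mul_le_mul_of_nonneg_left (sub_le_iff_le_add'.2 h1) (inv_pos.2 hq0).le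
        linarith
      · have h1 : y (a (ψ i v)) = 1 + ε * g (ψ i v) :=
          mem_tight.1 (hUy (Finset.mem_filter.1 hv).2)
        rw [mem_tight]
        change q⁻¹ * y (b i v) = 1 + ε / q * g (ψ i v)
        rw [hval, div_mul_eq_mul_div, div_eq_inv_mul, h1]
        ring
  -- such a member is its trace on `V i` together with the bit telling whether it contains `o i`
  have hmonocard : ∀ i, (C.filter fun U => ∀ x ∈ U, col x = i).card ≤ 2 * (Δ i).card := by
    intro i
    have : 2 * (Δ i).card = ((Finset.univ : Finset Bool) ×ˢ Δ i).card := by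
      rw [Finset.card_product]; simp
    rw [this]
    refine Finset.card_le_card_of_injOn
      (fun U => (decide (Sum.inr i ∈ U), Finset.univ.filter fun v => ψ i v ∈ U)) ?_ ?_
    · intro U hU
      have hU := (Finset.mem_filter.1 hU).1
      exact Finset.mem_product.2 ⟨Finset.mem_univ _, hmono i U hU⟩
    · intro U hU U' hU' heq
      have hU := (Finset.mem_filter.1 hU).2
      have hU' := (Finset.mem_filter.1 hU').2
      simp only [Prod.mk.injEq, decide_eq_decide] at heq
      obtain ⟨h1, h2⟩ := heq
      have h3 : ∀ v, ψ i v ∈ U ↔ ψ i v ∈ U' := fun v => by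
        simpa using Finset.ext_iff.1 h2 v
      have key : ∀ x, col x = i → (x ∈ U ↔ x ∈ U') := by
        rintro (⟨j, v⟩ | j) hx
        · obtain rfl : j = i := hx
          exact h3 v
        · obtain rfl : j = i := hx
          exact h1
      ext x
      exact ⟨fun h => (key x (hU x h)).1 h, fun h => (key x (hU' x h)).2 h⟩
  have hfiber : ∀ i, ((Finset.univ : Finset ι).filter fun x => col x = i).card ≤ 2 * n i := by
    intro i
    have hsub : ((Finset.univ : Finset ι).filter fun x => col x = i) ⊆
        insert (Sum.inr i) (Finset.univ.map (ψ i)) := by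
      rintro (⟨j, v⟩ | j) hx
      · obtain rfl : j = i := (Finset.mem_filter.1 hx).2
        exact Finset.mem_insert_of_mem (Finset.mem_map.2 ⟨v, Finset.mem_univ _, rfl⟩)
      · obtain rfl : j = i := (Finset.mem_filter.1 hx).2
        exact Finset.mem_insert_self _ _
    have h1 := Finset.card_le_card hsub
    have h2 := Finset.card_insert_le (Sum.inr i : ι) (Finset.univ.map (ψ i))
    rw [Finset.card_map, Finset.card_univ, Fintype.card_coe] at h2
    have := hn i
    change _ ≤ 2 * (V i).card
    change 1 ≤ (V i).card at this
    omega
  have hmixed := card_mixed col n e hfiber (by omega)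
  have hsplit : (C.filter fun U => U.card ≤ e + 1) ⊆
      ((Finset.univ : Finset (Finset ι)).filter fun U =>
        U.card ≤ e + 1 ∧ ∀ i, ∃ x ∈ U, col x ≠ i) ∪
      (Finset.univ : Finset (Fin m)).biUnion fun i => C.filter fun U => ∀ x ∈ U, col x = i := by
    intro U hU
    obtain ⟨hUC, hUc⟩ := Finset.mem_filter.1 hU
    by_cases h : ∀ i, ∃ x ∈ U, col x ≠ i
    · exact Finset.mem_union_left _ (Finset.mem_filter.2 ⟨Finset.mem_univ _, hUc, h⟩)
    · push Not at h
      obtain ⟨i, hi⟩ := h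
      exact Finset.mem_union_right _
        (Finset.mem_biUnion.2 ⟨i, Finset.mem_univ _, Finset.mem_filter.2 ⟨hUC, hi⟩⟩)
  have hmonoall : ((Finset.univ : Finset (Fin m)).biUnion fun i =>
      C.filter fun U => ∀ x ∈ U, col x = i).card ≤ m * (2 ^ (2 * e + 4) * crossSum n e) := by
    have := Finset.card_biUnion_le_card_mul (Finset.univ : Finset (Fin m))
      (fun i => C.filter fun U => ∀ x ∈ U, col x = i) (2 ^ (2 * e + 4) * crossSum n e) ?_
    · simpa using this
    intro i _
    calc _ ≤ 2 * (Δ i).card := hmonocard i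
      _ ≤ 2 * (2 ^ (2 * e + 3) * n i ^ e) := Nat.mul_le_mul_left _ (hΔcard i)
      _ ≤ 2 * (2 ^ (2 * e + 3) * crossSum n e) :=
          Nat.mul_le_mul_left _ (Nat.mul_le_mul_left _ (pow_le_crossSum hm hn e i))
      _ = _ := by ring
  have hD : Module.finrank ℝ (Submodule.span ℝ (range a)) ≤ 2 * e + 2 :=
    (Submodule.finrank_le _).trans hE
  calc Fintype.card κ ≤ C.card := hκ
    _ ≤ _ := Cplx_card_le hnd
    _ ≤ 2 ^ (2 * e + 3) * (C.filter fun U => U.card ≤ e + 1).card := by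
        refine Nat.mul_le_mul (Nat.pow_le_pow_right two_pos (by omega)) ?_
        refine Finset.card_le_card fun U hU => ?_
        simp only [Finset.mem_filter] at hU ⊢
        exact ⟨hU.1, by omega⟩
    _ ≤ 2 ^ (2 * e + 3) * ((2 * m) ^ (e + 1) * crossSum n e +
          m * (2 ^ (2 * e + 4) * crossSum n e)) := by
        refine Nat.mul_le_mul_left _ ((Finset.card_le_card hsplit).trans ?_)
        exact (Finset.card_union_le _ _).trans (add_le_add hmixed hmonoall)
    _ = _ := by ring

/-! ### Exposed faces -/

lemma convexHull_extremePoints_of_finite {E : Type*} [NormedAddCommGroup E] [NormedSpace ℝ E]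
    {P : Set E} (hP : P.Finite) :
    convexHull ℝ ((convexHull ℝ P).extremePoints ℝ) = convexHull ℝ P := by
  have h := closure_convexHull_extremePoints (hP.isCompact_convexHull ℝ) (convex_convexHull ℝ P)
  rwa [IsClosed.closure_eq] at h
  exact (hP.subset extremePoints_convexHull_subset).isClosed_convexHull ℝ

/-- An exposed face of a polytope is determined by the generating points it contains. -/
lemma exposed_subset_of_trace {E : Type*} [NormedAddCommGroup E] [NormedSpace ℝ E]
    {W F F' : Set E} (hW : W.Finite) (hF : IsExposed ℝ (convexHull ℝ W) F)
    (hF' : IsExposed ℝ (convexHull ℝ W) F') (h : ∀ w ∈ W, w ∈ F → w ∈ F') : F ⊆ F' := by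
  have hC := hW.isCompact_convexHull ℝ
  have hconv := convex_convexHull ℝ W
  have hKM := closure_convexHull_extremePoints (hF.isCompact hC) (hF.convex hconv)
  rw [← hKM]
  refine closure_minimal (convexHull_min ?_ (hF'.convex hconv)) (hF'.isClosed hC.isClosed)
  intro x hx
  exact h x (extremePoints_convexHull_subset
    (hF.isExtreme.extremePoints_subset_extremePoints hx)) (extremePoints_subset hx)

/-- A functional constant on a full-dimensional subset of a hyperplane with unit normal `u` is a
multiple of the inner product with `u`. -/
lemma functional_eq_of_const {d : ℕ} {u : EuclideanSpace ℝ (Fin (d + 1))} (hu : ‖u‖ = 1) {s : ℝ}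
    {K : Set (EuclideanSpace ℝ (Fin (d + 1)))} (hK : ∀ x ∈ K, ⟪x, u⟫ = s)
    (hdim : Module.finrank ℝ (vectorSpan ℝ K) = d)
    (l : EuclideanSpace ℝ (Fin (d + 1)) →ₗ[ℝ] ℝ) {M : ℝ} (hl : ∀ x ∈ K, l x = M)
    (x : EuclideanSpace ℝ (Fin (d + 1))) : l x = ⟪x, u⟫ * l u := by
  have hu0 : u ≠ 0 := fun h => by simp [h] at hu
  have hle : vectorSpan ℝ K ≤ (Submodule.span ℝ {u})ᗮ := by
    rw [vectorSpan_def, Submodule.span_le]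
    rintro _ ⟨p, hp, q, hq, rfl⟩
    rw [SetLike.mem_coe, Submodule.mem_orthogonal_singleton_iff_inner_left]
    change ⟪p - q, u⟫ = 0
    rw [inner_sub_left, hK p hp, hK q hq, sub_self]
  have hfin : Module.finrank ℝ (Submodule.span ℝ {u})ᗮ = d := by
    have : Fact (Module.finrank ℝ (EuclideanSpace ℝ (Fin (d + 1))) = d + 1) := ⟨by simp⟩
    exact Submodule.finrank_orthogonal_span_singleton hu0
  have heq := Submodule.eq_of_le_of_finrank_eq hle (hdim.trans hfin.symm)
  have hker : vectorSpan ℝ K ≤ LinearMap.ker l := by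
    rw [vectorSpan_def, Submodule.span_le]
    rintro _ ⟨p, hp, q, hq, rfl⟩
    simp [hl p hp, hl q hq]
  have hmem : x - ⟪x, u⟫ • u ∈ vectorSpan ℝ K := by
    rw [heq, Submodule.mem_orthogonal_singleton_iff_inner_left, inner_sub_left, inner_smul_left,
      real_inner_self_eq_norm_sq, hu]
    simp
  have := hker hmem
  rw [LinearMap.mem_ker, map_sub, map_smul, smul_eq_mul] at this
  linarith

theorem stmt5 (d m : ℕ) (hd : 3 ≤ d) (hodd : Odd d) (hm : 2 ≤ m) :
    ∃ c : ℝ, 0 < c ∧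
      ∀ (u : EuclideanSpace ℝ (Fin (d + 1))) (t : Fin m → ℝ)
        (P : Fin m → Set (EuclideanSpace ℝ (Fin (d + 1)))),
        ‖u‖ = 1 → StrictMono t →
        (∀ i, (P i).Finite) →
        (∀ i, P i ⊆ {x | ⟪x, u⟫ = t i}) →
        (∀ i, adim (convexHull ℝ (P i)) = d) →
        ∀ k, (d + 1) / 2 ≤ k → k ≤ d →
          (fCount (convexHull ℝ (⋃ i, P i)) k : ℝ) ≤
            c * ∑ i : Fin m, ∑ j : Fin m,
              if i ≠ j then
                (((convexHull ℝ (P i)).extremePoints ℝ).ncard : ℝ) *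
                  (((convexHull ℝ (P j)).extremePoints ℝ).ncard : ℝ) ^ (d / 2)
              else 0 := by
  classical
  obtain ⟨e, rfl⟩ := hodd
  have he : (2 * e + 1) / 2 = e := by omega
  rw [he]
  set K : ℕ := 2 ^ (2 * e + 3) * ((2 * m) ^ (e + 1) + m * 2 ^ (2 * e + 4)) with hK
  refine ⟨((m + 1 + K : ℕ) : ℝ), by positivity, ?_⟩
  intro u t P hu ht hfin hP hdim k _ _
  have hVfin : ∀ i, ((convexHull ℝ (P i)).extremePoints ℝ).Finite := fun i =>
    (hfin i).subset extremePoints_convexHull_subset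
  let V : Fin m → Finset (EuclideanSpace ℝ (Fin (2 * e + 1 + 1))) := fun i => (hVfin i).toFinset
  have hVhull : ∀ i, convexHull ℝ (V i : Set (EuclideanSpace ℝ (Fin (2 * e + 1 + 1)))) =
      convexHull ℝ (P i) := fun i => by
    simp only [V, Finite.coe_toFinset]
    exact convexHull_extremePoints_of_finite (hfin i)
  have hVP : ∀ i, ∀ v ∈ V i, v ∈ P i := fun i v hv =>
    extremePoints_convexHull_subset ((hVfin i).mem_toFinset.1 hv)
  have hVne : ∀ i, (V i).Nonempty := by
    intro i
    rw [← Finset.coe_nonempty, ← convexHull_nonempty_iff (𝕜 := ℝ), hVhull]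
    rw [nonempty_iff_ne_empty]
    intro h
    have := hdim i
    rw [h, adim, vectorSpan_empty, finrank_bot] at this
    omega
  set R := crossSum (fun i => (V i).card) e with hR
  have hsum : (∑ i : Fin m, ∑ j : Fin m,
      if i ≠ j then
        (((convexHull ℝ (P i)).extremePoints ℝ).ncard : ℝ) *
          (((convexHull ℝ (P j)).extremePoints ℝ).ncard : ℝ) ^ e
      else 0) = (R : ℝ) := by
    simp only [hR, crossSum, V, ncard_eq_toFinset_card _ (hVfin _)]
    push_cast
    rfl
  rw [hsum]
  have hR1 : 1 ≤ R :=
    (Nat.one_le_pow _ _ (Finset.card_pos.2 (hVne ⟨0, by omega⟩))).trans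
      (pow_le_crossSum hm (fun i => Finset.card_pos.2 (hVne i)) e ⟨0, by omega⟩)
  suffices h : fCount (convexHull ℝ (⋃ i, P i)) k ≤ (m + 1 + K) * R by exact_mod_cast h
  set C := convexHull ℝ (⋃ i, P i) with hC
  have hWfin : (⋃ i, P i).Finite := finite_iUnion hfin
  have hCV : C = convexHull ℝ (⋃ i, (V i : Set (EuclideanSpace ℝ (Fin (2 * e + 1 + 1))))) := by
    apply le_antisymm
    · refine convexHull_min (iUnion_subset fun i => ?_) (convex_convexHull ℝ _)
      refine (subset_convexHull ℝ (P i)).trans ?_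
      rw [← hVhull i]
      exact convexHull_mono (subset_iUnion_of_subset i subset_rfl)
    · exact convexHull_mono (iUnion_mono fun i v hv => hVP i v hv)
  have hVC : ∀ i, ∀ v ∈ V i, v ∈ C := fun i v hv =>
    subset_convexHull ℝ _ (mem_iUnion.2 ⟨i, hVP i v hv⟩)
  let G : Set (Set (EuclideanSpace ℝ (Fin (2 * e + 1 + 1)))) :=
    {F | IsExposed ℝ C F ∧ F.Nonempty ∧ adim F = k}
  change G.ncard ≤ _
  -- an infinite `G` would have `ncard` zero
  by_cases hGfin : G.Finite
  swap
  · rw [Set.Infinite.ncard hGfin]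
    exact Nat.zero_le _
  -- the supporting functional of a face and its maximum
  have hsupp : ∀ F ∈ G, ∃ (l : EuclideanSpace ℝ (Fin (2 * e + 1 + 1)) →ₗ[ℝ] ℝ) (M : ℝ),
      (∀ x ∈ C, l x ≤ M) ∧ ∀ x, x ∈ F ↔ x ∈ C ∧ l x = M := by
    rintro F ⟨hexp, hne, -⟩
    obtain ⟨l, hl⟩ := hexp hne
    obtain ⟨x₀, hx₀⟩ := hne
    have hx₀' := hx₀
    rw [hl] at hx₀'
    refine ⟨l, l x₀, hx₀'.2, fun x => ⟨fun hx => ?_, fun hx => ?_⟩⟩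
    · rw [hl] at hx
      exact ⟨hx.1, le_antisymm (hx₀'.2 x hx.1) (hx.2 x₀ hx₀'.1)⟩
    · rw [hl]
      refine ⟨hx.1, fun y hy => ?_⟩
      have h1 : l y ≤ l x₀ := hx₀'.2 y hy
      have h2 : l x = l x₀ := hx.2
      rw [h2]
      exact h1
  let Sp : Finset (Set (EuclideanSpace ℝ (Fin (2 * e + 1 + 1)))) :=
    insert C (Finset.univ.image fun i => {x | x ∈ C ∧ ⟪x, u⟫ = t i})
  have hSpcard : Sp.card ≤ m + 1 := by
    refine (Finset.card_insert_le _ _).trans ?_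
    have := Finset.card_image_le (s := (Finset.univ : Finset (Fin m)))
      (f := fun i => {x | x ∈ C ∧ ⟪x, u⟫ = t i})
    rw [Finset.card_univ, Fintype.card_fin] at this
    omega
  -- faces containing a whole slice are cut out by a multiple of the inner product with `u`
  have hspecial : ∀ F ∈ G, (∃ i, ∀ v ∈ V i, v ∈ F) → F ∈ Sp := by
    rintro F hF ⟨i, hi⟩
    obtain ⟨l, M, -, hFl⟩ := hsupp F hF
    have hconst : ∀ x ∈ convexHull ℝ (P i), l x = M := by
      intro x hx
      rw [← hVhull i] at hx
      have : convexHull ℝ (V i : Set (EuclideanSpace ℝ (Fin (2 * e + 1 + 1)))) ⊆ {x | l x = M} :=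
        convexHull_min (fun v hv => ((hFl v).1 (hi v hv)).2)
          (convex_hyperplane l.isLinear M)
      exact this hx
    have hslice : ∀ x ∈ convexHull ℝ (P i), ⟪x, u⟫ = t i := by
      intro x hx
      have : convexHull ℝ (P i) ⊆ {x | ⟪x, u⟫ = t i} := by
        refine convexHull_min (hP i) (convex_hyperplane (f := fun x => ⟪x, u⟫) ?_ (t i))
        exact ⟨fun x y => inner_add_left x y u, fun c x => real_inner_smul_left x u c⟩
      exact this hx
    have hl := functional_eq_of_const hu hslice (hdim i) l hconst
    obtain ⟨v, hv⟩ := hVne i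
    have hvM := ((hFl v).1 (hi v hv)).2
    have hvt : ⟪v, u⟫ = t i := hP i (hVP i v hv)
    by_cases hlu : l u = 0
    · refine Finset.mem_insert.2 (Or.inl ?_)
      ext x
      rw [hFl x, hl x, ← hvM, hl v, hlu]
      simp
    · refine Finset.mem_insert_of_mem (Finset.mem_image.2 ⟨i, Finset.mem_univ _, ?_⟩)
      ext x
      rw [hFl x, hl x, ← hvM, hl v, hvt, mul_left_inj' hlu]
      rfl
  let G' : Set (Set (EuclideanSpace ℝ (Fin (2 * e + 1 + 1)))) :=
    {F | F ∈ G ∧ ∀ i, ∃ v ∈ V i, v ∉ F}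
  have hG'fin : G'.Finite := hGfin.subset fun F hF => hF.1
  have hsplit : G ⊆ Sp ∪ G' := by
    intro F hF
    by_cases h : ∃ i, ∀ v ∈ V i, v ∈ F
    · exact Or.inl (hspecial F hF h)
    · push Not at h
      exact Or.inr ⟨hF, h⟩
  -- the remaining faces have functionals strictly below the maximum at all slice centroids
  have hG'card : G'.ncard ≤ K * R := by
    have : Fintype G' := hG'fin.fintype
    rw [← Nat.card_coe_set_eq, Nat.card_eq_fintype_card]
    choose l M hlM hFl using fun F : G' => hsupp F.1 F.2.1
    let o : Fin m → EuclideanSpace ℝ (Fin (2 * e + 1 + 1)) := fun i =>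
      ((V i).card : ℝ)⁻¹ • ∑ v ∈ V i, v
    have hcard : ∀ i, (0 : ℝ) < (V i).card := fun i => by exact_mod_cast Finset.card_pos.2 (hVne i)
    have ho : ∀ F i, l F (o i) < M F := by
      intro F i
      obtain ⟨v, hv, hvF⟩ := F.2.2 i
      have hlt : ∑ w ∈ V i, l F w < ∑ w ∈ V i, M F := by
        refine Finset.sum_lt_sum (fun w hw => hlM F w (hVC i w hw)) ⟨v, hv, ?_⟩
        refine lt_of_le_of_ne (hlM F v (hVC i v hv)) fun h => hvF ?_
        exact (hFl F v).2 ⟨hVC i v hv, h⟩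
      rw [Finset.sum_const, nsmul_eq_mul] at hlt
      simp only [o, map_smul, map_sum, smul_eq_mul]
      rwa [inv_mul_lt_iff₀ (hcard i)]
    let o₀ := o ⟨0, by omega⟩
    have hpos : ∀ F, 0 < M F - l F o₀ := fun F => sub_pos.2 (ho F _)
    let z : G' → Module.Dual ℝ (EuclideanSpace ℝ (Fin (2 * e + 1 + 1))) :=
      fun F => (M F - l F o₀)⁻¹ • l F
    have hzval : ∀ F x, z F (x - o₀) = (l F x - l F o₀) / (M F - l F o₀) := by
      intro F x
      simp only [z, LinearMap.smul_apply, map_sub, smul_eq_mul, div_eq_inv_mul]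
      ring
    have hz1 : ∀ F i, ∀ v ∈ V i, z F (v - o₀) = 1 ↔ v ∈ F.1 := by
      intro F i v hv
      rw [hzval, div_eq_one_iff_eq (hpos F).ne', sub_left_inj, hFl F v]
      exact ⟨fun h => ⟨hVC i v hv, h⟩, fun h => h.2⟩
    refine card_supporting_le hm (by simp) V hVne o o₀ (fun i => ?_) z (fun F i v hv => ?_)
      (fun F i => ?_) (fun F F' h => ?_)
    · have hoi : o i ∈ convexHull ℝ (P i) := by
        rw [← hVhull i]
        simp only [o, Finset.smul_sum]
        refine (convex_convexHull ℝ _).sum_mem (fun v _ => (inv_pos.2 (hcard i)).le) ?_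
          fun v hv => subset_convexHull ℝ _ hv
        rw [Finset.sum_const, nsmul_eq_mul, mul_inv_cancel₀ (hcard i).ne']
      have hle : Submodule.span ℝ (range fun v : V i =>
          (v : EuclideanSpace ℝ (Fin (2 * e + 1 + 1))) - o i) ≤
          vectorSpan ℝ (convexHull ℝ (P i)) := by
        rw [Submodule.span_le]
        rintro _ ⟨v, rfl⟩
        exact vsub_mem_vectorSpan ℝ (subset_convexHull ℝ _ (hVP i v v.2)) hoi
      exact (Submodule.finrank_mono hle).trans (hdim i).le
    · rw [hzval, div_le_one (hpos F)]
      linarith [hlM F v (hVC i v hv)]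
    · rw [hzval, div_lt_one (hpos F)]
      linarith [ho F i]
    · have hW : (⋃ i, (V i : Set (EuclideanSpace ℝ (Fin (2 * e + 1 + 1))))).Finite :=
        finite_iUnion fun i => (V i).finite_toSet
      have hiff : ∀ i, ∀ v ∈ V i, (v ∈ F.1 ↔ v ∈ F'.1) := fun i v hv =>
        (hz1 F i v hv).symm.trans ((h i v hv).trans (hz1 F' i v hv))
      have hF := F.2.1.1
      have hF' := F'.2.1.1
      rw [hCV] at hF hF'
      refine Subtype.ext (Subset.antisymm (exposed_subset_of_trace hW hF hF' ?_)
        (exposed_subset_of_trace hW hF' hF ?_))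
      · intro w hw hwF
        obtain ⟨i, hi⟩ := mem_iUnion.1 hw
        exact (hiff i w hi).1 hwF
      · intro w hw hwF
        obtain ⟨i, hi⟩ := mem_iUnion.1 hw
        exact (hiff i w hi).2 hwF
  calc G.ncard ≤ ((Sp : Set (Set (EuclideanSpace ℝ (Fin (2 * e + 1 + 1))))) ∪ G').ncard :=
        ncard_le_ncard hsplit (Sp.finite_toSet.union hG'fin)
    _ ≤ (Sp : Set (Set (EuclideanSpace ℝ (Fin (2 * e + 1 + 1))))).ncard + G'.ncard := ncard_union_le _ _
    _ ≤ (m + 1) + K * R := by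
        rw [ncard_coe_finset]
        exact add_le_add hSpcard hG'card
    _ ≤ (m + 1) * R + K * R := by
        have := Nat.le_mul_of_pos_right (m + 1) hR1
        omega
    _ = _ := by ring
end

section
/- Let d ≥ 2 and m ≥ 2, let Π_1, …, Π_m be parallel hyperplanes in E^{d+1} with Π_j above Π_i for j > i, let P_i ⊂ Π_i be finite sets with each 𝒫_i = conv(P_i) d-dimensional, and let 𝒫 = conv(P_1 ∪ … ∪ P_m), so that 𝒫 is a (d+1)-dimensional polytope with facets 𝒫_1 = 𝒫 ∩ Π_1 and 𝒫_m = 𝒫 ∩ Π_m. Let y be a point beyond the facet 𝒫_1 and beneath every other facet of 𝒫, let z be a point beyond the facet 𝒫_m and beneath every other facet of 𝒫, and let Q = conv(P_1 ∪ … ∪ P_m ∪ {y, z}). Then every nonempty proper exposed face F of 𝒫 with F ≠ 𝒫_1 and F ≠ 𝒫_m is also an exposed face of Q. (Claim proved inside Lemma 2.5.) -/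
/-!
The key point is that `F` is contained in a facet `G` different from `KP1` and `KPm`.  Among the
proper exposed faces containing `F` and different from `KP1`, `KPm`, choose `G` of maximal
dimension.  If `G` were not a facet, then rotating its supporting hyperplane about `G` in two
opposite directions until it hits a new vertex would give two proper faces `G₁`, `G₂` of larger
dimension with `G₁ ∩ G₂ = G` (`exists_two_faces`).  By maximality both are among `KP1`, `KPm`;
they are not equal, as `G` would then be one of these two, and they are not `KP1` and `KPm`, as
these are disjoint while `G` is nonempty.

Let `l ≤ c` be the inequality defining `F` and `k ≤ b` the one defining `G ⊇ F`.  As `y` and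
`z` are beneath `G`, `k < b` at `y` and at `z`, so for large `M` the functional `l + M • k` attains
its maximum over `Q = conv (KP ∪ {y, z})` exactly on `F`.
-/

open Set Pointwise RealInnerProductSpace

/-- `F` is a facet of `C`: an exposed face of dimension one less than `C`. -/
def IsFacetOf {N : ℕ} (C F : Set (EuclideanSpace ℝ (Fin N))) : Prop :=
  IsExposed ℝ C F ∧ F.Nonempty ∧ adim F + 1 = adim C

/-- `p` is beyond the facet `F` of `C`: `p` lies in the open halfspace bounded by the affine
hull of `F` that does not contain `C`. -/
def IsBeyond {N : ℕ} (C F : Set (EuclideanSpace ℝ (Fin N)))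
    (p : EuclideanSpace ℝ (Fin N)) : Prop :=
  ∀ x ∈ C, x ∉ (affineSpan ℝ F : Set (EuclideanSpace ℝ (Fin N))) →
    (affineSpan ℝ F).SOppSide p x

/-- `p` is beneath the facet `F` of `C`: `p` lies in the open halfspace bounded by the affine
hull of `F` that contains the interior of `C`. -/
def IsBeneath {N : ℕ} (C F : Set (EuclideanSpace ℝ (Fin N)))
    (p : EuclideanSpace ℝ (Fin N)) : Prop :=
  ∀ x ∈ C, x ∉ (affineSpan ℝ F : Set (EuclideanSpace ℝ (Fin N))) →
    (affineSpan ℝ F).SSameSide p x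

section Faces

variable {N : ℕ}

/-! ### Exposed faces and dimension -/

/-- A nonempty exposed face is cut out by an equation `l = c`, with `l ≤ c` valid on the set. -/
lemma exists_eq_of_isExposed {C F : Set (EuclideanSpace ℝ (Fin N))}
    (h : IsExposed ℝ C F) (hF : F.Nonempty) :
    ∃ (l : EuclideanSpace ℝ (Fin N) →L[ℝ] ℝ) (c : ℝ),
      (∀ x ∈ C, l x ≤ c) ∧ F = {x ∈ C | l x = c} := by
  obtain ⟨l, hl⟩ := h hF
  obtain ⟨a, ha⟩ := hF
  have ha' := ha
  rw [hl] at ha'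
  refine ⟨l, l a, ha'.2, ?_⟩
  rw [hl]
  ext x
  constructor
  · rintro ⟨hx, h2⟩
    exact ⟨hx, le_antisymm (ha'.2 x hx) (h2 a ha'.1)⟩
  · rintro ⟨hx, h2⟩
    exact ⟨hx, fun w hw => by rw [h2]; exact ha'.2 w hw⟩

lemma isExposed_of_eq {C F : Set (EuclideanSpace ℝ (Fin N))}
    (l : EuclideanSpace ℝ (Fin N) →L[ℝ] ℝ) (c : ℝ)
    (h : ∀ x ∈ C, l x ≤ c) (hF : F = {x ∈ C | l x = c}) : IsExposed ℝ C F := by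
  rintro ⟨a, ha⟩
  rw [hF] at ha
  refine ⟨l, ?_⟩
  rw [hF]
  ext x
  constructor
  · rintro ⟨hx, h2⟩
    exact ⟨hx, fun w hw => by rw [h2]; exact h w hw⟩
  · rintro ⟨hx, h2⟩
    exact ⟨hx, le_antisymm (h x hx) (ha.2 ▸ h2 a ha.1)⟩

lemma le_on_convexHull {S : Set (EuclideanSpace ℝ (Fin N))}
    (l : EuclideanSpace ℝ (Fin N) →L[ℝ] ℝ) (c : ℝ) (h : ∀ x ∈ S, l x ≤ c) :
    ∀ x ∈ convexHull ℝ S, l x ≤ c := by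
  have : convexHull ℝ S ⊆ {x | l x ≤ c} :=
    convexHull_min h (convex_halfSpace_le l.toLinearMap.isLinear c)
  exact this

lemma vectorSpan_convexHull_eq (S : Set (EuclideanSpace ℝ (Fin N))) :
    vectorSpan ℝ (convexHull ℝ S) = vectorSpan ℝ S := by
  rw [← direction_affineSpan, affineSpan_convexHull, direction_affineSpan]

lemma vectorSpan_le_ker {S : Set (EuclideanSpace ℝ (Fin N))}
    (g : EuclideanSpace ℝ (Fin N) →ₗ[ℝ] ℝ) (b : ℝ) (h : ∀ x ∈ S, g x = b) :
    vectorSpan ℝ S ≤ LinearMap.ker g := by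
  rw [vectorSpan, Submodule.span_le]
  rintro _ ⟨p, hp, q, hq, rfl⟩
  simp [h p hp, h q hq]

lemma adim_lt_adim {F G : Set (EuclideanSpace ℝ (Fin N))} (hFG : F ⊆ G) (hF : F.Nonempty)
    (g : EuclideanSpace ℝ (Fin N) →L[ℝ] ℝ) (b : ℝ) (h : ∀ x ∈ F, g x = b)
    {v : EuclideanSpace ℝ (Fin N)} (hv : v ∈ G) (hgv : g v ≠ b) : adim F < adim G := by
  apply Submodule.finrank_lt_finrank_of_lt
  refine lt_of_le_of_ne (vectorSpan_mono ℝ hFG) ?_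
  intro heq
  obtain ⟨a, ha⟩ := hF
  have h1 : v -ᵥ a ∈ vectorSpan ℝ G := vsub_mem_vectorSpan ℝ hv (hFG ha)
  rw [← heq] at h1
  have h2 := vectorSpan_le_ker g.toLinearMap b h h1
  simp [h a ha, sub_eq_zero] at h2
  exact hgv h2

/-! ### Existence of facets -/

/-- The supporting hyperplane `l = c` of the face `G` is tilted about `G` towards the side
`g > b` until it meets a further vertex. -/
lemma exists_tilted_face {S G : Set (EuclideanSpace ℝ (Fin N))} (hS : S.Finite)
    (hG : G.Nonempty) (l g : EuclideanSpace ℝ (Fin N) →L[ℝ] ℝ) (c b : ℝ)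
    (hl : ∀ x ∈ convexHull ℝ S, l x ≤ c) (hGl : G = {x ∈ convexHull ℝ S | l x = c})
    (hg : ∀ x ∈ G, g x = b) (hpos : ∃ v ∈ S, b < g v) (hneg : ∃ v ∈ S, g v < b) :
    ∃ s > 0, ∃ G₁, G₁ = {x ∈ convexHull ℝ S | l x + s * g x = c + s * b} ∧
      IsExposed ℝ (convexHull ℝ S) G₁ ∧ G ⊆ G₁ ∧ G₁ ≠ convexHull ℝ S ∧ adim G < adim G₁ := by
  have hlt : ∀ v ∈ S, g v ≠ b → l v < c := by
    intro v hv hgv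
    refine lt_of_le_of_ne (hl v (subset_convexHull ℝ S hv)) fun h => hgv (hg v ?_)
    rw [hGl]
    exact ⟨subset_convexHull ℝ S hv, h⟩
  obtain ⟨v, ⟨hvS, hvb⟩, hmin⟩ := Set.exists_min_image {v ∈ S | b < g v}
    (fun v => (c - l v) / (g v - b)) (hS.subset (sep_subset _ _)) hpos
  set s := (c - l v) / (g v - b) with hs
  have hvb' : 0 < g v - b := sub_pos.2 hvb
  have hs0 : 0 < s := div_pos (sub_pos.2 (hlt v hvS hvb.ne')) hvb'
  have hsv : s * (g v - b) = c - l v := div_mul_cancel₀ _ hvb'.ne'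
  have hle : ∀ x ∈ S, (l + s • g) x ≤ c + s * b := by
    intro x hx
    change l x + s * g x ≤ c + s * b
    rcases le_or_gt (g x) b with h | h
    · have := hl x (subset_convexHull ℝ S hx)
      have := mul_le_mul_of_nonneg_left h hs0.le
      linarith
    · have h2 := hmin x ⟨hx, h⟩
      have h3 := (le_div_iff₀ (sub_pos.2 h)).1 h2
      linarith
  have hsubset : G ⊆ {x ∈ convexHull ℝ S | l x + s * g x = c + s * b} := by
    intro x hx
    have hgx := hg x hx
    rw [hGl] at hx
    exact ⟨hx.1, by rw [hx.2, hgx]⟩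
  refine ⟨s, hs0, _, rfl, ?_, hsubset, ?_, ?_⟩
  · exact isExposed_of_eq (l + s • g) (c + s * b) (le_on_convexHull _ _ hle) rfl
  · obtain ⟨x, hx, hxb⟩ := hneg
    intro heq
    have hxC := subset_convexHull ℝ S hx
    have h1 := hl x hxC
    rw [← heq] at hxC
    have h2 := hxC.2
    have := mul_lt_mul_of_pos_left hxb hs0
    linarith
  · exact adim_lt_adim hsubset hG g b hg (v := v)
      ⟨subset_convexHull ℝ S hvS, by linarith⟩ hvb.ne'

/-- A proper face of codimension at least two in a full-dimensional polytope is the intersection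
of two proper faces of larger dimension. -/
lemma exists_two_faces {S G : Set (EuclideanSpace ℝ (Fin N))} (hS : S.Finite)
    (hspan : vectorSpan ℝ S = ⊤) (hG : G.Nonempty) (hex : IsExposed ℝ (convexHull ℝ S) G)
    (hdim : adim G + 1 < N) :
    ∃ G₁ G₂, (IsExposed ℝ (convexHull ℝ S) G₁ ∧ G ⊆ G₁ ∧ G₁ ≠ convexHull ℝ S ∧
        adim G < adim G₁) ∧
      (IsExposed ℝ (convexHull ℝ S) G₂ ∧ G ⊆ G₂ ∧ G₂ ≠ convexHull ℝ S ∧ adim G < adim G₂) ∧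
      G₁ ∩ G₂ ⊆ G := by
  obtain ⟨l, c, hl, hGl⟩ := exists_eq_of_isExposed hex hG
  obtain ⟨a, ha⟩ := hG
  -- Requiring `g` to vanish on `w` makes the values `g v - g a`, for `v ∈ S`, sum to zero,
  -- so that both signs occur.
  set w : EuclideanSpace ℝ (Fin N) := ∑ v ∈ hS.toFinset, (v - a) with hw
  have hW : vectorSpan ℝ G ⊔ Submodule.span ℝ {w} < ⊤ := by
    rw [lt_top_iff_ne_top]
    intro h
    have h1 := Submodule.finrank_add_le_finrank_add_finrank (vectorSpan ℝ G)
      (Submodule.span ℝ {w})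
    rw [h, finrank_top, finrank_euclideanSpace_fin] at h1
    have h2 := finrank_span_le_card (R := ℝ) ({w} : Set (EuclideanSpace ℝ (Fin N)))
    simp only [toFinset_singleton, Finset.card_singleton] at h2
    unfold adim at hdim
    omega
  obtain ⟨g₀, hg₀, hker⟩ := Submodule.exists_le_ker_of_lt_top _ hW
  set g : EuclideanSpace ℝ (Fin N) →L[ℝ] ℝ := LinearMap.toContinuousLinearMap g₀ with hgdef
  have hgg : ∀ x, g x = g₀ x := fun x => rfl
  have hg : ∀ x ∈ G, g x = g a := by
    intro x hx
    have h1 : x -ᵥ a ∈ LinearMap.ker g₀ :=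
      hker (Submodule.mem_sup_left (vsub_mem_vectorSpan ℝ hx ha))
    simpa [hgg, sub_eq_zero] using h1
  have hsum : ∑ v ∈ hS.toFinset, (g v - g a) = 0 := by
    have h1 : w ∈ LinearMap.ker g₀ :=
      hker (Submodule.mem_sup_right (Submodule.mem_span_singleton_self w))
    simpa [hgg, hw] using h1
  have hne : ∃ v ∈ hS.toFinset, g v - g a ≠ 0 := by
    by_contra! hcon
    apply hg₀
    have h1 := vectorSpan_le_ker (S := S) g₀ (g a)
      fun x hx => sub_eq_zero.1 (hcon x (hS.mem_toFinset.2 hx))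
    rw [hspan, top_le_iff] at h1
    exact LinearMap.ker_eq_top.1 h1
  have hpos : ∃ v ∈ S, g a < g v := by
    obtain ⟨v, hv, h⟩ := Finset.exists_pos_of_sum_zero_of_exists_nonzero _ hsum hne
    exact ⟨v, hS.mem_toFinset.1 hv, sub_pos.1 h⟩
  have hneg : ∃ v ∈ S, g v < g a := by
    obtain ⟨v, hv, h⟩ := Finset.exists_pos_of_sum_zero_of_exists_nonzero
      (s := hS.toFinset) (fun v => -(g v - g a)) (by rw [Finset.sum_neg_distrib, hsum, neg_zero])
      (by simpa only [ne_eq, neg_eq_zero] using hne)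
    exact ⟨v, hS.mem_toFinset.1 hv, by linarith⟩
  obtain ⟨s, hs, G₁, hG₁, h₁⟩ := exists_tilted_face hS ⟨a, ha⟩ l g c (g a) hl hGl hg hpos hneg
  obtain ⟨r, hr, G₂, hG₂, h₂⟩ := exists_tilted_face hS ⟨a, ha⟩ l (-g) c (-g a) hl hGl
    (fun x hx => by simp [hg x hx])
    (by obtain ⟨v, hv, h⟩ := hneg; exact ⟨v, hv, by simpa using h⟩)
    (by obtain ⟨v, hv, h⟩ := hpos; exact ⟨v, hv, by simpa using h⟩)
  refine ⟨G₁, G₂, h₁, h₂, ?_⟩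
  rintro x ⟨hx₁, hx₂⟩
  rw [hG₁] at hx₁
  rw [hG₂] at hx₂
  rw [hGl]
  refine ⟨hx₁.1, ?_⟩
  have e₁ := hx₁.2
  have e₂ := hx₂.2
  simp only [neg_apply] at e₂
  have h3 : (r + s) * (l x - c) = 0 := by linear_combination r * e₁ + s * e₂
  rcases mul_eq_zero.1 h3 with h | h
  · linarith
  · linarith

/-- A proper nonempty face other than two given disjoint sets `A`, `B` lies in a facet other than
`A` and `B`. -/
lemma exists_facet {S F A B : Set (EuclideanSpace ℝ (Fin N))} (hS : S.Finite)
    (hspan : vectorSpan ℝ S = ⊤) (hF : F.Nonempty) (hex : IsExposed ℝ (convexHull ℝ S) F)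
    (hFC : F ≠ convexHull ℝ S) (hFA : F ≠ A) (hFB : F ≠ B) (hAB : Disjoint A B) :
    ∃ G, IsFacetOf (convexHull ℝ S) G ∧ F ⊆ G ∧ G ≠ convexHull ℝ S ∧ G ≠ A ∧ G ≠ B := by
  have hC : adim (convexHull ℝ S) = N := by
    rw [adim, vectorSpan_convexHull_eq, hspan, finrank_top, finrank_euclideanSpace_fin]
  let p : ℕ → Prop := fun n => ∃ G, IsExposed ℝ (convexHull ℝ S) G ∧ F ⊆ G ∧
    G ≠ convexHull ℝ S ∧ G ≠ A ∧ G ≠ B ∧ adim G = n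
  have hbound : ∀ n, p n → n ≤ N := by
    rintro n ⟨G, -, -, -, -, -, rfl⟩
    exact (Submodule.finrank_le _).trans (finrank_euclideanSpace_fin (𝕜 := ℝ)).le
  classical
  have hp₀ : p (adim F) := ⟨F, hex, subset_rfl, hFC, hFA, hFB, rfl⟩
  obtain ⟨G, hGex, hFG, hGC, hGA, hGB, hGdim⟩ : p (Nat.findGreatest p N) :=
    Nat.findGreatest_spec (hbound _ hp₀) hp₀
  have hmax : ∀ n, p n → n ≤ adim G := fun n hn =>
    hGdim ▸ Nat.le_findGreatest (hbound n hn) hn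
  have hG : G.Nonempty := hF.mono hFG
  refine ⟨G, ⟨hGex, hG, ?_⟩, hFG, hGC, hGA, hGB⟩
  rw [hC]
  apply le_antisymm
  · obtain ⟨l, c, hl, hGl⟩ := exists_eq_of_isExposed hGex hG
    have hsub : G ⊆ convexHull ℝ S := hGex.subset
    obtain ⟨v, hv, hvG⟩ := exists_of_ssubset (hsub.ssubset_of_ne hGC)
    have := adim_lt_adim hsub hG l c (fun x hx => by rw [hGl] at hx; exact hx.2) hv
      (fun h => hvG (by rw [hGl]; exact ⟨hv, h⟩))
    omega
  · by_contra! hlt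
    obtain ⟨G₁, G₂, ⟨e₁, s₁, n₁, d₁⟩, ⟨e₂, s₂, n₂, d₂⟩, hint⟩ :=
      exists_two_faces hS hspan hG hGex hlt
    have key : ∀ G', IsExposed ℝ (convexHull ℝ S) G' → G ⊆ G' → G' ≠ convexHull ℝ S →
        adim G < adim G' → G' = A ∨ G' = B := by
      intro G' e s n d
      by_contra! hcon
      exact absurd (hmax _ ⟨G', e, hFG.trans s, n, hcon.1, hcon.2, rfl⟩) (not_le.2 d)
    obtain ⟨a, ha⟩ := hG
    rcases key G₁ e₁ s₁ n₁ d₁ with rfl | rfl <;> rcases key G₂ e₂ s₂ n₂ d₂ with rfl | rfl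
    · exact hGA (s₁.antisymm (by simpa using hint))
    · exact Set.disjoint_left.1 hAB (s₁ ha) (s₂ ha)
    · exact Set.disjoint_left.1 hAB (s₂ ha) (s₁ ha)
    · exact hGB (s₁.antisymm (by simpa using hint))

/-! ### Adding points beneath a facet -/

lemma lt_of_isBeneath {C G : Set (EuclideanSpace ℝ (Fin N))} {p : EuclideanSpace ℝ (Fin N)}
    (k : EuclideanSpace ℝ (Fin N) →L[ℝ] ℝ) (b : ℝ) (hk : ∀ x ∈ C, k x ≤ b)
    (hG : G = {x ∈ C | k x = b}) (hGC : G ≠ C) (hp : IsBeneath C G p) : k p < b := by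
  have hsub : G ⊆ C := by rw [hG]; exact sep_subset _ _
  obtain ⟨x, hx, hxG⟩ := exists_of_ssubset (hsub.ssubset_of_ne hGC)
  have hkx : k x < b := lt_of_le_of_ne (hk x hx) fun h => hxG (by rw [hG]; exact ⟨hx, h⟩)
  have haff : ∀ q ∈ affineSpan ℝ G, k q = b := by
    intro q hq
    obtain ⟨a, ha⟩ := (affineSpan_nonempty ℝ).1 ⟨q, hq⟩
    have hkG : ∀ x ∈ G, k x = b := fun x hx => by rw [hG] at hx; exact hx.2
    have h1 : q -ᵥ a ∈ vectorSpan ℝ G := by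
      rw [← direction_affineSpan]
      exact AffineSubspace.vsub_mem_direction hq (subset_affineSpan ℝ G ha)
    have h2 := vectorSpan_le_ker k.toLinearMap b hkG h1
    simp [hkG a ha, sub_eq_zero] at h2
    exact h2
  obtain ⟨⟨p₁, hp₁, p₂, hp₂, hray⟩, hpn, hxn⟩ :=
    hp x hx (fun h => hkx.ne (haff x h))
  rcases hray with h | h | ⟨r₁, r₂, hr₁, hr₂, h⟩
  · rw [vsub_eq_zero_iff_eq] at h
    exact absurd (h ▸ hp₁) hpn
  · rw [vsub_eq_zero_iff_eq] at h
    exact absurd (h ▸ hp₂) hxn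
  · have h3 := congrArg k h
    simp only [vsub_eq_sub, map_smul, map_sub, smul_eq_mul, haff p₁ hp₁, haff p₂ hp₂] at h3
    have h4 : r₂ * (k x - b) < 0 := mul_neg_of_pos_of_neg hr₂ (by linarith)
    rw [← h3] at h4
    have := (pos_iff_neg_of_mul_neg h4).1 hr₁
    linarith

/-- A face `F` of `conv S` stays a face after adding two points lying strictly beneath the
hyperplane of some face `G ⊇ F`. -/
lemma isExposed_insert_two {S F G : Set (EuclideanSpace ℝ (Fin N))}
    {y z : EuclideanSpace ℝ (Fin N)} (l k : EuclideanSpace ℝ (Fin N) →L[ℝ] ℝ) (c b : ℝ)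
    (hl : ∀ x ∈ convexHull ℝ S, l x ≤ c) (hF : F = {x ∈ convexHull ℝ S | l x = c})
    (hk : ∀ x ∈ convexHull ℝ S, k x ≤ b) (hG : G = {x ∈ convexHull ℝ S | k x = b})
    (hFne : F.Nonempty) (hFG : F ⊆ G) (hy : k y < b) (hz : k z < b) :
    IsExposed ℝ (convexHull ℝ (S ∪ {y, z})) F := by
  obtain ⟨M, hM0, hMy, hMz⟩ : ∃ M : ℝ, 0 ≤ M ∧ l y - c < M * (b - k y) ∧
      l z - c < M * (b - k z) := by
    obtain ⟨M, hM⟩ := exists_gt (max 0 (max ((l y - c) / (b - k y)) ((l z - c) / (b - k z))))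
    rw [max_lt_iff, max_lt_iff, div_lt_iff₀ (by linarith), div_lt_iff₀ (by linarith)] at hM
    exact ⟨M, hM.1.le, hM.2.1, hM.2.2⟩
  set f : EuclideanSpace ℝ (Fin N) →L[ℝ] ℝ := l + M • k with hf
  have hfx : ∀ x, f x = l x + M * k x := fun x => rfl
  have hfC : ∀ x ∈ convexHull ℝ S, f x ≤ c + M * b := fun x hx => by
    rw [hfx]
    have := mul_le_mul_of_nonneg_left (hk x hx) hM0
    linarith [hl x hx]
  have hfy : f y < c + M * b := by rw [hfx]; linarith
  have hfz : f z < c + M * b := by rw [hfx]; linarith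
  have hSQ : convexHull ℝ S ⊆ convexHull ℝ (S ∪ {y, z}) := convexHull_mono subset_union_left
  refine isExposed_of_eq f (c + M * b) (le_on_convexHull f _ ?_) ?_
  · rintro x (hx | rfl | rfl)
    · exact hfC x (subset_convexHull ℝ S hx)
    · exact hfy.le
    · exact hfz.le
  ext x
  constructor
  · intro hx
    have hxG := hFG hx
    rw [hF] at hx
    rw [hG] at hxG
    exact ⟨hSQ hx.1, by rw [hfx, hx.2, hxG.2]⟩
  · rintro ⟨hxQ, hxf⟩
    obtain ⟨a, ha⟩ := hFne
    have hSne : S.Nonempty := by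
      rw [hF] at ha
      exact convexHull_nonempty_iff.1 ⟨a, ha.1⟩
    -- A point of `Q` is a convex combination of `v ∈ conv S` and `w ∈ [y, z]`, and `f` is
    -- strictly below its maximum at `w`.
    rw [convexHull_union hSne (by simp), mem_convexJoin] at hxQ
    obtain ⟨v, hv, w, hw, α, β, hα, hβ, hαβ, hx⟩ := hxQ
    have hfw : f w < c + M * b := by
      rw [convexHull_pair] at hw
      obtain ⟨γ, δ, hγ, hδ, hγδ, rfl⟩ := hw
      rw [map_add, map_smul, map_smul, smul_eq_mul, smul_eq_mul]
      rcases hγ.eq_or_lt with h | h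
      · have : δ = 1 := by linarith
        rw [← h, this]
        linarith
      · have h1 := mul_lt_mul_of_pos_left hfy h
        have h2 := mul_le_mul_of_nonneg_left hfz.le hδ
        have h3 : γ * (c + M * b) + δ * (c + M * b) = c + M * b := by
          rw [← add_mul, hγδ, one_mul]
        linarith
    have hβ0 : β = 0 := by
      by_contra hne
      have h1 := mul_lt_mul_of_pos_left hfw (lt_of_le_of_ne hβ (Ne.symm hne))
      have h2 := mul_le_mul_of_nonneg_left (hfC v hv) hα
      have h3 : α * (c + M * b) + β * (c + M * b) = c + M * b := by
        rw [← add_mul, hαβ, one_mul]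
      have h4 : f x = α * f v + β * f w := by rw [← hx]; simp
      linarith
    have hα1 : α = 1 := by linarith
    have hxv : x = v := by rw [← hx, hβ0, hα1]; simp
    rw [← hxv] at hv
    rw [hF]
    refine ⟨hv, le_antisymm (hl x hv) ?_⟩
    have := mul_le_mul_of_nonneg_left (hk x hv) hM0
    rw [hfx] at hxf
    linarith

end Faces

/-! ### The faces of `𝒫` in `Q` -/

theorem stmt6 (d m : ℕ) (hd : 2 ≤ d) (hm : 2 ≤ m)
    (u : EuclideanSpace ℝ (Fin (d + 1))) (hu : ‖u‖ = 1)
    (t : Fin m → ℝ) (ht : StrictMono t)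
    (P : Fin m → Set (EuclideanSpace ℝ (Fin (d + 1))))
    (hfin : ∀ i, (P i).Finite)
    (hsub : ∀ i, P i ⊆ {x | ⟪x, u⟫ = t i})
    (hdim : ∀ i, adim (convexHull ℝ (P i)) = d)
    (KP KP1 KPm Q : Set (EuclideanSpace ℝ (Fin (d + 1))))
    (hKP : KP = convexHull ℝ (⋃ i, P i))
    (hKP1 : KP1 = KP ∩ {x | ⟪x, u⟫ = t ⟨0, by omega⟩})
    (hKPm : KPm = KP ∩ {x | ⟪x, u⟫ = t ⟨m - 1, by omega⟩})
    (y z : EuclideanSpace ℝ (Fin (d + 1)))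
    (hy₁ : IsBeyond KP KP1 y)
    (hy₂ : ∀ F, IsFacetOf KP F → F ≠ KP1 → IsBeneath KP F y)
    (hz₁ : IsBeyond KP KPm z)
    (hz₂ : ∀ F, IsFacetOf KP F → F ≠ KPm → IsBeneath KP F z)
    (hQ : Q = convexHull ℝ ((⋃ i, P i) ∪ {y, z})) :
    ∀ F : Set (EuclideanSpace ℝ (Fin (d + 1))),
      IsExposed ℝ KP F → F.Nonempty → F ≠ KP → F ≠ KP1 → F ≠ KPm →
      IsExposed ℝ Q F := by
  intro F hex hF hFC hF1 hFm
  subst hKP hQ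
  have hS : (⋃ i, P i).Finite := Set.finite_iUnion hfin
  set i₀ : Fin m := ⟨0, by omega⟩ with hi₀
  set i₁ : Fin m := ⟨m - 1, by omega⟩ with hi₁
  have hlt : t i₀ < t i₁ := ht (by rw [Fin.lt_def]; change 0 < m - 1; omega)
  have hPne : ∀ i, (P i).Nonempty := by
    intro i
    by_contra h
    rw [not_nonempty_iff_eq_empty] at h
    have := hdim i
    rw [h, adim, convexHull_empty, vectorSpan_empty, finrank_bot] at this
    omega
  have hspan : vectorSpan ℝ (⋃ i, P i) = ⊤ := by
    obtain ⟨v, hv⟩ := hPne i₁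
    have h1 : adim (P i₀) < adim (⋃ i, P i) :=
      adim_lt_adim (subset_iUnion P i₀) (hPne i₀) (innerSL ℝ u) (t i₀)
        (fun x hx => by rw [innerSL_apply_apply, real_inner_comm]; exact hsub i₀ hx)
        (mem_iUnion_of_mem i₁ hv)
        (by
          rw [innerSL_apply_apply, real_inner_comm]
          exact fun h => hlt.ne' ((hsub i₁ hv).symm.trans h))
    have h2 := hdim i₀
    rw [adim, vectorSpan_convexHull_eq] at h2
    unfold adim at h1
    apply Submodule.eq_top_of_finrank_eq
    have h3 := Submodule.finrank_le (vectorSpan ℝ (⋃ i, P i))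
    rw [finrank_euclideanSpace_fin] at h3 ⊢
    omega
  have hdisj : Disjoint KP1 KPm := by
    rw [hKP1, hKPm, Set.disjoint_left]
    rintro x ⟨-, h1⟩ ⟨-, h2⟩
    exact hlt.ne (h1.symm.trans h2)
  obtain ⟨G, hGf, hFG, hGC, hG1, hGm⟩ := exists_facet hS hspan hF hex hFC hF1 hFm hdisj
  obtain ⟨l, c, hl, hFl⟩ := exists_eq_of_isExposed hex hF
  obtain ⟨k, b, hk, hGk⟩ := exists_eq_of_isExposed hGf.1 hGf.2.1
  exact isExposed_insert_two l k c b hl hFl hk hGk hF hFG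
    (lt_of_isBeneath k b hk hGk hGC (hy₂ G hGf hG1))
    (lt_of_isBeneath k b hk hGk hGC (hz₂ G hGf hGm))
end
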